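/- Let R be a Noetherian local ring with infinite residue field, and let I be an R-ideal of height g ≥ 1 generated by a regular sequence. Then for every j ≥ 1, core(I^j) = I^{gj−g+1}. If moreover R is Gorenstein, then γ(I^j) equals the binomial coefficient C(gj−1, g−1). -/

import Mathlib

open IsLocalRing

universe u v

namespace CPU

section Defs

variable {R : Type u} [CommRing R]

/-- The minimal number of generators of a submodule, as an extended natural number. -/
noncomputable def muE {M : Type v} [AddCommGroup M] [Module R M] (N : Submodule R M) : ℕ∞ :=
  sInf {n : ℕ∞ | ∃ s : Finset M, (s.card : ℕ∞) = n ∧ Submodule.span R (s : Set M) = N}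

/-- The Krull dimension of a ring, valued in `WithBot ℕ∞`. -/
noncomputable def rDim (S : Type v) [CommRing S] : WithBot ℕ∞ :=
  ringKrullDim S

/-- `J` is a reduction of `I`. -/
def IsReduction (J I : Ideal R) : Prop :=
  J ≤ I ∧ ∃ r : ℕ, I ^ (r + 1) = J * I ^ r

/-- `J` is a minimal reduction of `I`. -/
def IsMinimalReduction (J I : Ideal R) : Prop :=
  IsReduction J I ∧ ∀ J' : Ideal R, IsReduction J' I → J' ≤ J → J' = J

/-- The core of an ideal: the intersection of all of its minimal reductions. -/
noncomputable def core (I : Ideal R) : Ideal R :=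
  sInf {J : Ideal R | IsMinimalReduction J I}

/-- The reduction number of `I`. -/
noncomputable def reductionNumber (I : Ideal R) : ℕ∞ :=
  sInf {n : ℕ∞ | ∃ r : ℕ, (r : ℕ∞) = n ∧ ∃ J : Ideal R,
    IsMinimalReduction J I ∧ I ^ (r + 1) = J * I ^ r}

/-- `γ(I)`: the least number of minimal reductions whose intersection is the core. -/
noncomputable def gamma (I : Ideal R) : ℕ∞ :=
  sInf {n : ℕ∞ | ∃ t : ℕ, (t : ℕ∞) = n ∧ ∃ Js : Fin t → Ideal R,
    (∀ i, IsMinimalReduction (Js i) I) ∧ core I = ⨅ i, Js i}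

/-- The height of an ideal. -/
noncomputable def ht (I : Ideal R) : WithBot ℕ∞ :=
  ⨅ (p : PrimeSpectrum R) (_ : I ≤ p.asIdeal),
    rDim (Localization.AtPrime p.asIdeal)

/-- The Krull dimension of the special fiber ring of `I`,
i.e. the analytic spread of `I`. -/
noncomputable def fiberDim [IsLocalRing R] (I : Ideal R) : WithBot ℕ∞ :=
  rDim (↥(reesAlgebra I) ⧸
    (Ideal.map (algebraMap R ↥(reesAlgebra I)) (maximalIdeal R)))

/-- The condition `G_s`. -/
def Gcond (I : Ideal R) (s : ℕ) : Prop :=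
  ∀ p : PrimeSpectrum R, I ≤ p.asIdeal →
    rDim (Localization.AtPrime p.asIdeal) < (s : WithBot ℕ∞) →
    (muE (Ideal.map (algebraMap R (Localization.AtPrime p.asIdeal)) I) : WithBot ℕ∞) ≤
      rDim (Localization.AtPrime p.asIdeal)

/-- Depth of a module over a local ring, via lengths of regular sequences in the
maximal ideal. -/
noncomputable def mDepth (R : Type u) [CommRing R] [IsLocalRing R]
    (M : Type v) [AddCommGroup M] [Module R M] : ℕ∞ :=
  sSup {n : ℕ∞ | ∃ rs : List R, (∀ x ∈ rs, x ∈ maximalIdeal R) ∧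
    RingTheory.Sequence.IsRegular M rs ∧ (rs.length : ℕ∞) = n}

/-- Depth of the quotient `R/K` of a local ring `R`. -/
noncomputable def qDepth (R : Type u) [CommRing R] [IsLocalRing R] (K : Ideal R) : ℕ∞ :=
  mDepth R (R ⧸ K)

/-- The socle of `R/K`, for `R` local. -/
noncomputable def socle (R : Type u) [CommRing R] [IsLocalRing R] (K : Ideal R) :
    Ideal (R ⧸ K) :=
  Submodule.colon (⊥ : Ideal (R ⧸ K)) (Ideal.map (Ideal.Quotient.mk K) (maximalIdeal R))

/-- The Cohen–Macaulay type of the quotient `R/K` of a local ring `R`. -/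
noncomputable def qType (R : Type u) [CommRing R] [IsLocalRing R] (K : Ideal R) : ℕ∞ :=
  sInf {n : ℕ∞ | ∃ rs : List R, (∀ x ∈ rs, x ∈ maximalIdeal R) ∧
    RingTheory.Sequence.IsRegular (R ⧸ K) rs ∧ (rs.length : ℕ∞) = qDepth R K ∧
    muE (socle R (K ⊔ Ideal.ofList rs)) = n}

/-- Cohen–Macaulayness for a quotient `R/K` of a local ring `R`. -/
def IsCMQuot (R : Type u) [CommRing R] [IsLocalRing R] (K : Ideal R) : Prop :=
  rDim (R ⧸ K) = (qDepth R K : WithBot ℕ∞)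

/-- A Cohen–Macaulay local ring: depth equals Krull dimension. -/
def IsCMLocalRing (R : Type u) [CommRing R] [IsLocalRing R] : Prop :=
  rDim R = (qDepth R (⊥ : Ideal R) : WithBot ℕ∞)

/-- A Gorenstein local ring: Cohen–Macaulay of type one. -/
def IsGorensteinLocalRing (R : Type u) [CommRing R] [IsLocalRing R] : Prop :=
  IsCMLocalRing R ∧ qType R (⊥ : Ideal R) = 1

/-- Gorensteinness of the quotient ring `R/K` of a local ring. -/
def IsGorQuot (R : Type u) [CommRing R] [IsLocalRing R] (K : Ideal R) : Prop :=
  IsCMQuot R K ∧ qType R K = 1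

/-- A regular local ring: the maximal ideal is generated by `dim R` elements. -/
def IsRegularLocal (R : Type u) [CommRing R] [IsLocalRing R] : Prop :=
  IsNoetherianRing R ∧ (muE (maximalIdeal R) : WithBot ℕ∞) = rDim R

/-- Serre's condition `S₂` for the quotient ring `R/K`. -/
def QuotS2 (K : Ideal R) : Prop :=
  ∀ (q : Ideal R) (hq : q.IsPrime), K ≤ q →
    letI := hq
    min 2 (rDim ((Localization.AtPrime q) ⧸
        (Ideal.map (algebraMap R (Localization.AtPrime q)) K)))
      ≤ (qDepth (Localization.AtPrime q)
          (Ideal.map (algebraMap R (Localization.AtPrime q)) K) : WithBot ℕ∞)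

/-- `K` is an `s`-residual intersection of `I`. -/
def IsResidualIntersection (I K : Ideal R) (s : ℕ) : Prop :=
  K ≠ ⊤ ∧ ht I ≤ (s : WithBot ℕ∞) ∧ (s : WithBot ℕ∞) ≤ ht K ∧
    ∃ a : Ideal R, a ≤ I ∧ (∃ f : Finset R, f.card ≤ s ∧ Ideal.span (f : Set R) = a) ∧
      K = Submodule.colon a I

/-- `K` is a geometric `s`-residual intersection of `I`. -/
def IsGeometricRI (I K : Ideal R) (s : ℕ) : Prop :=
  IsResidualIntersection I K s ∧ (s : WithBot ℕ∞) + 1 ≤ ht (I ⊔ K)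

/-- `I` is weakly `s`-residually `S₂`. -/
def WeaklyResS2 (I : Ideal R) (s : ℕ) : Prop :=
  ∀ i ≤ s, ∀ K : Ideal R, IsGeometricRI I K i → QuotS2 K

/-- The condition `AN_s` for `I`. -/
def ANcond [IsLocalRing R] (I : Ideal R) (s : ℕ) : Prop :=
  ∀ i ≤ s, ∀ K : Ideal R, IsResidualIntersection I K i → IsCMQuot R K

/-- The condition `AN_s⁻` for `I`. -/
def ANminus [IsLocalRing R] (I : Ideal R) (s : ℕ) : Prop :=
  ∀ i ≤ s, ∀ K : Ideal R, IsGeometricRI I K i → IsCMQuot R K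

/-- `I` is universally weakly `s`-residually `S₂`: for every finite set of
variables, the extension of `I` to `R(x₁, …, x_n)` is weakly `s`-residually `S₂`. -/
def UnivWeaklyResS2 [IsLocalRing R] (I : Ideal R) (s : ℕ) : Prop :=
  ∀ (n : ℕ)
    (hP : (Ideal.map (MvPolynomial.C (σ := Fin n)) (maximalIdeal R)).IsPrime),
    letI := hP
    WeaklyResS2 (Ideal.map
      ((algebraMap (MvPolynomial (Fin n) R)
        (Localization.AtPrime
          (Ideal.map (MvPolynomial.C (σ := Fin n)) (maximalIdeal R)))).comp
        (MvPolynomial.C)) I) s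

/-- The `j`-th Fitting ideal of (the module) `I`. -/
noncomputable def fittingIdeal (I : Ideal R) (j : ℕ) : Ideal R :=
  ⨆ (n : ℕ) (π : (Fin n → R) →ₗ[R] R) (_ : LinearMap.range π = I),
    Ideal.span {d : R | ∃ (v : Fin (n - j) → (Fin n → R)) (r : Fin (n - j) → Fin n),
      (∀ k, π (v k) = 0) ∧ d = Matrix.det (Matrix.of fun i k => v k (r i))}

/-- The set `Q(I)` of primes containing `Fitt_ℓ(I)` at which `R` has dimension `ℓ`
and `I` has analytic spread `ℓ`. -/
def QSet [IsLocalRing R] (I : Ideal R) (l : ℕ) : Set (PrimeSpectrum R) :=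
  {p | fittingIdeal I l ≤ p.asIdeal ∧
    rDim (Localization.AtPrime p.asIdeal) = (l : WithBot ℕ∞) ∧
    fiberDim (Ideal.map (algebraMap R (Localization.AtPrime p.asIdeal)) I)
      = (l : WithBot ℕ∞)}

/-- An ideal is integrally closed if it admits no larger ideal of which it is a
reduction. -/
def IsIntClosedIdeal (I : Ideal R) : Prop :=
  ∀ J : Ideal R, IsReduction I J → J = I

/-- A normal ideal: all powers are integrally closed. -/
def IsNormalIdeal (I : Ideal R) : Prop :=
  ∀ j : ℕ, IsIntClosedIdeal (I ^ j)

/-- `φ` is a presentation matrix of the ideal `I` (with `n = μ(I)` rows). -/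
def Presents {n m : ℕ} (φ : Matrix (Fin n) (Fin m) R) (I : Ideal R) : Prop :=
  muE I = (n : ℕ∞) ∧ ∃ π : (Fin n → R) →ₗ[R] R, LinearMap.range π = I ∧
    LinearMap.range (Matrix.toLin' φ) = LinearMap.ker π

/-- The ideal of `t × t` minors of a matrix. -/
noncomputable def minorsIdeal {n m : ℕ} (t : ℕ) (φ : Matrix (Fin n) (Fin m) R) : Ideal R :=
  Ideal.span {d : R | ∃ (r : Fin t → Fin n) (c : Fin t → Fin m),
    d = (φ.submatrix r c).det}

/-- The grade of an ideal: the supremum of lengths of regular sequences contained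
in it. -/
noncomputable def grade (I : Ideal R) : ℕ∞ :=
  sSup {n : ℕ∞ | ∃ rs : List R, (∀ x ∈ rs, x ∈ I) ∧
    RingTheory.Sequence.IsRegular R rs ∧ (rs.length : ℕ∞) = n}

end Defs

/-- `M` has projective dimension at most `n` over `R`. -/
def ProjDimLE (R : Type u) [CommRing R] :
    (n : ℕ) → (M : Type u) → [AddCommGroup M] → [Module R M] → Prop
  | 0, M, _, _ => Module.Projective R M
  | n + 1, M, _, _ => ∃ (k : ℕ) (f : (Fin k → R) →ₗ[R] M), Function.Surjective f ∧
      ProjDimLE R n ↥(LinearMap.ker f)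

section Defs2

variable {R : Type u} [CommRing R]

/-- `M` has projective dimension exactly `n` over `R`. -/
def ProjDimEq (R : Type u) [CommRing R] (M : Type u) [AddCommGroup M] [Module R M]
    (n : ℕ) : Prop :=
  ProjDimLE R n M ∧ ∀ m : ℕ, ProjDimLE R m M → n ≤ m

/-- A perfect ideal: the projective dimension of `R/I` equals the grade of `I`. -/
def IsPerfectIdeal (I : Ideal R) : Prop :=
  ∃ g : ℕ, grade I = (g : ℕ∞) ∧ ProjDimEq R (R ⧸ I) g

/-- The multiplicative set which is the complement of the union of the associated
primes of `R/H`. -/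
def assComplement (H : Ideal R) : Submonoid R where
  carrier := {r : R | ∀ p ∈ associatedPrimes R (R ⧸ H), r ∉ p}
  one_mem' := fun p hp => (Ideal.ne_top_iff_one p).mp hp.1.ne_top
  mul_mem' := fun {a b} ha hb p hp hab =>
    (hp.1.mem_or_mem hab).elim (ha p hp) (hb p hp)

/-- The `j`-th symbolic power of `H`. -/
noncomputable def symbolicPower (H : Ideal R) (j : ℕ) : Ideal R :=
  Ideal.comap (algebraMap R (Localization (assComplement H)))
    (Ideal.map (algebraMap R (Localization (assComplement H))) (H ^ j))

/-- Serre's condition `S₂` for a module. -/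
def ModuleS2 (S : Type u) [CommRing S] (M : Type v) [AddCommGroup M] [Module S M] : Prop :=
  ∀ (q : Ideal S) (hq : q.IsPrime),
    letI := hq
    min 2 (rDim ((Localization.AtPrime q) ⧸
        (Module.annihilator (Localization.AtPrime q) (LocalizedModule q.primeCompl M))))
      ≤ (mDepth (Localization.AtPrime q) (LocalizedModule q.primeCompl M) : WithBot ℕ∞)

/-- `M` is a maximal Cohen–Macaulay `S`-module. -/
def IsMCM (S : Type u) [CommRing S] (M : Type v) [AddCommGroup M] [Module S M] : Prop :=
  ∀ (q : Ideal S) (hq : q.IsMaximal),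
    letI := hq.isPrime
    (mDepth (Localization.AtPrime q) (LocalizedModule q.primeCompl M) : WithBot ℕ∞) =
      rDim (Localization.AtPrime q)

end Defs2

set_option linter.unusedSectionVars false
set_option linter.unusedVariables false

section RegFam

open RingTheory.Sequence

variable {R : Type u} [CommRing R]

lemma smulReg_iff (J : Ideal R) (r : R) :
    IsSMulRegular (R ⧸ (J • ⊤ : Submodule R R)) r ↔ ∀ a, r * a ∈ J → a ∈ J := by
  have h : (J • ⊤ : Submodule R R) = J := by simp
  rw [h, isSMulRegular_quotient_iff_mem_of_smul_mem]
  rfl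

/-- A family is regular if the associated list is weakly regular. -/
def Reg {g : ℕ} (y : Fin g → R) : Prop := IsWeaklyRegular R (List.ofFn y)

lemma ofList_take {g : ℕ} (y : Fin g → R) (i : Fin g) :
    Ideal.ofList ((List.ofFn y).take i) = Ideal.span (y '' Set.Iio i) := by
  unfold Ideal.ofList
  congr 1
  ext a
  simp only [Set.mem_ofPred_eq, List.mem_take_iff_getElem, Set.mem_image, Set.mem_Iio]
  constructor
  · rintro ⟨k, hk, rfl⟩
    have hk' : k < (i : ℕ) := by simp at hk; exact hk
    exact ⟨⟨k, by omega⟩, Fin.lt_def.2 hk', by simp⟩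
  · rintro ⟨k, hk, rfl⟩
    have := Fin.lt_def.1 hk
    exact ⟨k, by simp; omega, by simp⟩

lemma reg_iff {g : ℕ} (y : Fin g → R) :
    Reg y ↔ ∀ i a, y i * a ∈ Ideal.span (y '' Set.Iio i) → a ∈ Ideal.span (y '' Set.Iio i) := by
  unfold Reg
  rw [isWeaklyRegular_iff]
  constructor
  · intro h i
    have := h i (by simp)
    rw [smulReg_iff, ofList_take] at this
    simpa using this
  · intro h i hi
    have hi' : i < g := by simpa using hi
    have := h ⟨i, hi'⟩
    rw [smulReg_iff]
    have e := ofList_take y ⟨i, hi'⟩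
    simp only at e
    rw [e]
    simpa using this

lemma wr_append_singleton (l : List R) (r : R) :
    IsWeaklyRegular R (l ++ [r]) ↔
      IsWeaklyRegular R l ∧ ∀ a, r * a ∈ Ideal.ofList l → a ∈ Ideal.ofList l := by
  rw [isWeaklyRegular_append_iff, isWeaklyRegular_singleton_iff, smulReg_iff]

lemma ofList_erase {g : ℕ} (y : Fin g → R) (i : Fin g) :
    Ideal.ofList (((List.finRange g).erase i).map y) = Ideal.span (y '' {i}ᶜ) := by
  unfold Ideal.ofList
  congr 1
  ext a
  simp [(List.nodup_finRange g).mem_erase_iff]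

lemma perm_erase {g : ℕ} (y : Fin g → R) (i : Fin g) :
    (List.ofFn y).Perm (((List.finRange g).erase i).map y ++ [y i]) := by
  rw [List.ofFn_eq_map]
  have h := (List.perm_cons_erase (List.mem_finRange i)).map y
  refine h.trans ?_
  rw [List.map_cons]
  exact (List.perm_append_singleton _ _).symm

variable [IsNoetherianRing R] [IsLocalRing R]

lemma reg_split {g : ℕ} {y : Fin g → R} (hy : ∀ i, y i ∈ maximalIdeal R) (i : Fin g) :
    Reg y ↔ IsWeaklyRegular R (((List.finRange g).erase i).map y) ∧
      ∀ a, y i * a ∈ Ideal.span (y '' {i}ᶜ) → a ∈ Ideal.span (y '' {i}ᶜ) := by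
  rw [← ofList_erase, ← wr_append_singleton]
  constructor
  · intro h
    refine isWeaklyRegular_of_perm_of_subset_maximalIdeal h (perm_erase y i) ?_
    intro r hr
    simp only [List.mem_ofFn] at hr
    obtain ⟨k, rfl⟩ := hr
    exact hy k
  · intro h
    refine isWeaklyRegular_of_perm_of_subset_maximalIdeal h (perm_erase y i).symm ?_
    intro r hr
    have := (perm_erase y i).symm.mem_iff.1 hr
    simp only [List.mem_ofFn] at this
    obtain ⟨k, rfl⟩ := this
    exact hy k

lemma Reg.perm {g : ℕ} {y : Fin g → R} (h : Reg y) (hy : ∀ i, y i ∈ maximalIdeal R)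
    (σ : Equiv.Perm (Fin g)) : Reg (y ∘ σ) := by
  refine isWeaklyRegular_of_perm_of_subset_maximalIdeal h ?_ ?_
  · exact (Equiv.Perm.ofFn_comp_perm σ y).symm
  · intro r hr
    simp only [List.mem_ofFn] at hr
    obtain ⟨k, rfl⟩ := hr
    exact hy k

lemma image_update_compl {g : ℕ} (y : Fin g → R) (i : Fin g) (a : R) :
    Function.update y i a '' {i}ᶜ = y '' {i}ᶜ := by
  refine Set.image_congr fun k hk => ?_
  exact Function.update_of_ne hk _ _

lemma map_update_erase {g : ℕ} (y : Fin g → R) (i : Fin g) (a : R) :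
    ((List.finRange g).erase i).map (Function.update y i a) = ((List.finRange g).erase i).map y := by
  refine List.map_congr_left fun k hk => ?_
  rw [(List.nodup_finRange g).mem_erase_iff] at hk
  exact Function.update_of_ne hk.1 _ _

lemma update_mem {g : ℕ} {y : Fin g → R} (hy : ∀ i, y i ∈ maximalIdeal R) (i : Fin g) {a : R}
    (ha : a ∈ maximalIdeal R) (k : Fin g) : Function.update y i a k ∈ maximalIdeal R := by
  by_cases h : k = i
  · subst h; simpa using ha
  · rw [Function.update_of_ne h]; exact hy k

lemma Reg.update_mul {g : ℕ} {y : Fin g → R} (hy : ∀ i, y i ∈ maximalIdeal R) (i : Fin g) {a b : R}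
    (ha : a ∈ maximalIdeal R) (hb : b ∈ maximalIdeal R)
    (h1 : Reg (Function.update y i a)) (h2 : Reg (Function.update y i b)) :
    Reg (Function.update y i (a * b)) := by
  rw [reg_split (update_mem hy i ha) i, image_update_compl, map_update_erase] at h1
  rw [reg_split (update_mem hy i hb) i, image_update_compl, map_update_erase] at h2
  rw [reg_split (update_mem hy i (Ideal.mul_mem_right b _ ha)) i, image_update_compl,
    map_update_erase]
  simp only [Function.update_self] at h1 h2 ⊢
  refine ⟨h1.1, fun c hc => h2.2 _ (h1.2 _ ?_)⟩
  rwa [← mul_assoc]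

lemma Reg.mixed {g : ℕ} (P : Fin g → Set R) (hP : ∀ i, P i ⊆ maximalIdeal R)
    (h : ∀ y : Fin g → R, (∀ i, y i ∈ P i) → Reg y) :
    ∀ y : Fin g → R, (∀ i, y i ∈ Subsemigroup.closure (P i)) → Reg y := by
  classical
  have hcl : ∀ i, ∀ z ∈ Subsemigroup.closure (P i), z ∈ maximalIdeal R := by
    intro i z hz
    induction hz using Subsemigroup.closure_induction with
    | mem x hx => exact hP i hx
    | mul x y _ _ hx _ => exact Ideal.mul_mem_right _ _ hx
  suffices H : ∀ T : Finset (Fin g), ∀ y : Fin g → R,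
      (∀ i ∈ T, y i ∈ Subsemigroup.closure (P i)) → (∀ i ∉ T, y i ∈ P i) → Reg y by
    intro y hy
    exact H Finset.univ y (fun i _ => hy i) (fun i hi => absurd (Finset.mem_univ i) hi)
  intro T
  induction T using Finset.induction_on with
  | empty => intro y _ h2; exact h y (fun i => h2 i (by simp))
  | insert i T hi ih =>
    intro y h1 h2
    have hm : ∀ k, y k ∈ maximalIdeal R := fun k => by
      by_cases hk : k ∈ insert i T
      · exact hcl k _ (h1 k hk)
      · exact hP k (h2 k hk)
    have key : ∀ z ∈ Subsemigroup.closure (P i), Reg (Function.update y i z) := by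
      intro z hz
      induction hz using Subsemigroup.closure_induction with
      | mem x hx =>
        apply ih
        · intro k hk
          have : k ≠ i := by rintro rfl; exact hi hk
          rw [Function.update_of_ne this]
          exact h1 k (Finset.mem_insert_of_mem hk)
        · intro k hk
          by_cases hki : k = i
          · subst hki; simpa using hx
          · rw [Function.update_of_ne hki]
            exact h2 k (by simp [hki, hk])
      | mul a b ha hb h1 h2 => exact Reg.update_mul hm i (hcl i a ha) (hcl i b hb) h1 h2
    have := key (y i) (h1 i (Finset.mem_insert_self i T))
    rwa [Function.update_eq_self] at this

lemma span_triangular {g : ℕ} {x y : Fin g → R}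
    (hy : ∀ i, y i - x i ∈ Ideal.span (x '' Set.Iio i)) (T : Set (Fin g)) (hT : IsLowerSet T) :
    Ideal.span (y '' T) = Ideal.span (x '' T) := by
  have h1 : ∀ T : Set (Fin g), IsLowerSet T → Ideal.span (y '' T) ≤ Ideal.span (x '' T) := by
    intro T hT
    rw [Ideal.span_le]
    rintro _ ⟨k, hk, rfl⟩
    have h2 : Ideal.span (x '' Set.Iio k) ≤ Ideal.span (x '' T) :=
      Ideal.span_mono (Set.image_mono fun l hl => hT (le_of_lt hl) hk)
    have h3 : x k ∈ Ideal.span (x '' T) := Ideal.subset_span ⟨k, hk, rfl⟩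
    simpa using Ideal.add_mem _ (h2 (hy k)) h3
  have h2 : ∀ k : Fin g, x k ∈ Ideal.span (y '' Set.Iic k) := by
    intro k
    induction k using WellFoundedLT.induction with
    | _ k ih =>
      have h3 : Ideal.span (x '' Set.Iio k) ≤ Ideal.span (y '' Set.Iic k) := by
        rw [Ideal.span_le]
        rintro _ ⟨l, hl, rfl⟩
        exact Ideal.span_mono (Set.image_mono (Set.Iic_subset_Iic.2 (le_of_lt hl))) (ih l hl)
      have h4 : y k ∈ Ideal.span (y '' Set.Iic k) := Ideal.subset_span ⟨k, Set.mem_Iic.2 le_rfl, rfl⟩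
      simpa using Ideal.sub_mem _ h4 (h3 (hy k))
  refine le_antisymm (h1 T hT) ?_
  rw [Ideal.span_le]
  rintro _ ⟨k, hk, rfl⟩
  exact Ideal.span_mono (Set.image_mono fun l hl => hT hl hk) (h2 k)

lemma Reg.triangular {g : ℕ} {x y : Fin g → R} (h : Reg x)
    (hy : ∀ i, y i - x i ∈ Ideal.span (x '' Set.Iio i)) : Reg y := by
  have key : ∀ i : Fin g, Ideal.span (y '' Set.Iio i) = Ideal.span (x '' Set.Iio i) :=
    fun i => span_triangular hy _ (isLowerSet_Iio i)
  rw [reg_iff] at h ⊢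
  intro i a ha
  rw [key] at ha ⊢
  refine h i a ?_
  have := Ideal.mul_mem_right a _ (hy i)
  have h3 := Ideal.sub_mem _ ha this
  convert h3 using 1
  ring

/-- Cancellation lemma. -/
lemma cancel {g : ℕ} (u v : Fin g → R)
    (h : ∀ i, ∀ y : Fin g → R, (∀ k, y k = v k ∨ y k = u k * v k) →
      ∀ a, u i * a ∈ Ideal.span (y '' {i}ᶜ) → a ∈ Ideal.span (y '' {i}ᶜ))
    (a : R) (ha : a * ∏ i, u i ∈ Ideal.span (Set.range (fun i => u i * v i))) :
    a ∈ Ideal.span (Set.range v) := by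
  classical
  suffices H : ∀ T : Finset (Fin g), ∀ a : R, a * ∏ i ∈ T, u i ∈
      Ideal.span (Set.range (fun i => if i ∈ T then u i * v i else v i)) →
      a ∈ Ideal.span (Set.range v) by
    exact H Finset.univ a (by simpa using ha)
  clear ha a
  intro T
  induction T using Finset.induction_on with
  | empty => intro a ha; simpa using ha
  | insert i T hi ih =>
    intro a ha
    apply ih
    set y : Fin g → R := fun k => if k ∈ insert i T then u k * v k else v k with hy
    have hyi : y i = u i * v i := by simp [hy]
    have hr : Set.range y = insert (y i) (y '' {i}ᶜ) := by
      rw [← Set.image_univ, ← Set.image_insert_eq]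
      congr 1
      ext k; simp [em]
    rw [hr, Ideal.mem_span_insert] at ha
    obtain ⟨b, z, hz, e⟩ := ha
    rw [Finset.prod_insert hi, hyi] at e
    have h1 : u i * (a * ∏ k ∈ T, u k - b * v i) ∈ Ideal.span (y '' {i}ᶜ) := by
      have : u i * (a * ∏ k ∈ T, u k - b * v i) = z := by linear_combination e
      rwa [this]
    have h2 := h i y (fun k => by simp only [hy]; split_ifs <;> simp) _ h1
    have h3 : y '' {i}ᶜ ⊆ Set.range (fun k => if k ∈ T then u k * v k else v k) := by
      rintro _ ⟨k, hk, rfl⟩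
      refine ⟨k, ?_⟩
      have : k ≠ i := hk
      simp [hy, this]
    have h4 := Ideal.span_mono h3 h2
    have h5 : v i ∈ Ideal.span (Set.range (fun k => if k ∈ T then u k * v k else v k)) :=
      Ideal.subset_span ⟨i, by simp [hi]⟩
    have h6 := Ideal.add_mem _ h4 (Ideal.mul_mem_left _ b h5)
    simpa using h6

end RegFam

section QR

variable {R : Type u} [CommRing R] [IsNoetherianRing R] [IsLocalRing R]

lemma pow_mem_semigroup {S : Subsemigroup R} {a : R} (ha : a ∈ S) (n : ℕ) (hn : n ≠ 0) :
    a ^ n ∈ S := by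
  obtain ⟨n, rfl⟩ := Nat.exists_eq_succ_of_ne_zero hn
  induction n with
  | zero => simpa using ha
  | succ n ih => rw [pow_succ]; exact S.mul_mem (ih (by simp)) ha

lemma cancel_reg {g : ℕ} (x l : Fin g → R) (hx : ∀ i, x i ∈ maximalIdeal R)
    (hl : ∀ i, l i ∈ maximalIdeal R)
    (h : ∀ y : Fin g → R, (∀ i, y i = x i ∨ y i = l i) → Reg y) (b : Fin g → ℕ) (a : R)
    (ha : a * ∏ i, x i ^ b i ∈ Ideal.span (Set.range (fun i => x i ^ b i * l i))) :
    a ∈ Ideal.span (Set.range l) := by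
  classical
  have hmix := Reg.mixed (fun i => {x i, l i}) (fun i => by
    rintro z (rfl | rfl)
    · exact hx i
    · exact hl i) (fun y hy => h y (fun i => hy i))
  refine cancel (fun i => x i ^ b i) l ?_ a ha
  intro i y hy c hc
  by_cases hb : b i = 0
  · simpa [hb] using hc
  have hxc : ∀ k, x k ∈ Subsemigroup.closure ({x k, l k} : Set R) := fun k =>
    Subsemigroup.subset_closure (by simp)
  have hlc : ∀ k, l k ∈ Subsemigroup.closure ({x k, l k} : Set R) := fun k =>
    Subsemigroup.subset_closure (by simp)
  have hyc : ∀ k, Function.update y i (x i ^ b i) k ∈ Subsemigroup.closure ({x k, l k} : Set R) := by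
    intro k
    by_cases hk : k = i
    · subst hk
      simpa using pow_mem_semigroup (hxc k) _ hb
    · rw [Function.update_of_ne hk]
      rcases hy k with e | e
      · rw [e]; exact hlc k
      · rw [e]
        by_cases hbk : b k = 0
        · simpa [hbk] using hlc k
        · exact Subsemigroup.mul_mem _ (pow_mem_semigroup (hxc k) _ hbk) (hlc k)
  have hr := hmix _ hyc
  have hm : ∀ k, Function.update y i (x i ^ b i) k ∈ maximalIdeal R := by
    refine update_mem ?_ i (Ideal.pow_mem_of_mem _ (hx i) _ (Nat.pos_of_ne_zero hb))
    intro k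
    rcases hy k with e | e
    · rw [e]; exact hl k
    · rw [e]; exact Ideal.mul_mem_left _ _ (hl k)
  rw [reg_split hm i, image_update_compl] at hr
  simpa using hr.2 c (by simpa using hc)

lemma monomial_mem_Z {g : ℕ} (x : Fin g → R) (b c : Fin g → ℕ) (h : ∃ i, b i < c i) :
    ∏ i, x i ^ c i ∈ Ideal.span (Set.range (fun i => x i ^ b i * x i)) := by
  classical
  obtain ⟨i, hi⟩ := h
  rw [← Finset.mul_prod_erase _ _ (Finset.mem_univ i)]
  refine Ideal.mul_mem_right _ _ ?_
  obtain ⟨e, he⟩ := Nat.exists_eq_add_of_lt hi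
  rw [he, show b i + e + 1 = (b i + 1) + e by ring, pow_add, pow_succ]
  exact Ideal.mul_mem_right _ _ (Ideal.subset_span ⟨i, rfl⟩)

lemma eval_eq_sum_univ {g : ℕ} (x : Fin g → R) (P : MvPolynomial (Fin g) R) :
    MvPolynomial.eval x P = ∑ c ∈ P.support, P.coeff c * ∏ i, x i ^ c i :=
  MvPolynomial.eval_eq' x P

lemma hom_sum {K : Type*} [CommSemiring K] {g d : ℕ} {P : MvPolynomial (Fin g) K}
    (hP : P.IsHomogeneous d) {b : Fin g →₀ ℕ} (hb : P.coeff b ≠ 0) : ∑ i, b i = d := by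
  have h1 := hP hb
  have h2 : (Finsupp.weight (1 : Fin g → ℕ)) b = b.degree :=
    (DFunLike.congr_fun Finsupp.degree_eq_weight_one b).symm
  rw [h2, Finsupp.degree_eq_sum] at h1
  exact h1

lemma qr {g : ℕ} {x : Fin g → R} (hx : ∀ i, x i ∈ maximalIdeal R) (h : Reg x)
    {P : MvPolynomial (Fin g) R} {d : ℕ} (hP : P.IsHomogeneous d)
    (he : MvPolynomial.eval x P ∈ (Ideal.span (Set.range x)) ^ (d + 1)) (b : Fin g →₀ ℕ) :
    P.coeff b ∈ Ideal.span (Set.range x) := by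
  classical
  by_cases hb : P.coeff b = 0
  · rw [hb]; exact Ideal.zero_mem _
  have hbd : ∑ i, b i = d := hom_sum hP hb
  set Z := Ideal.span (Set.range (fun i => x i ^ b i * x i)) with hZ
  have hI : (Ideal.span (Set.range x)) ^ (d + 1) ≤ Z := by
    intro z hz
    obtain ⟨Q, hQ, rfl⟩ := (Ideal.mem_span_pow_iff_exists_isHomogeneous _ _).1 hz
    rw [eval_eq_sum_univ]
    refine Ideal.sum_mem _ fun c hc => Ideal.mul_mem_left _ _ (monomial_mem_Z x b c ?_)
    by_contra hcon
    push Not at hcon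
    have h1 : ∑ i, c i = d + 1 := hom_sum hQ (MvPolynomial.mem_support_iff.1 hc)
    have := Finset.sum_le_sum (fun i (_ : i ∈ Finset.univ) => hcon i)
    omega
  have h1 := hI he
  rw [eval_eq_sum_univ, ← Finset.add_sum_erase _ _ (MvPolynomial.mem_support_iff.2 hb)] at h1
  have h2 : ∑ c ∈ P.support.erase b, P.coeff c * ∏ i, x i ^ c i ∈ Z := by
    refine Ideal.sum_mem _ fun c hc => Ideal.mul_mem_left _ _ (monomial_mem_Z x b c ?_)
    rw [Finset.mem_erase] at hc
    by_contra hcon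
    push Not at hcon
    have h1 : ∑ i, c i = d := hom_sum hP (MvPolynomial.mem_support_iff.1 hc.2)
    apply hc.1
    ext i
    exact (Finset.sum_eq_sum_iff_of_le (fun i _ => hcon i)).1 (h1.trans hbd.symm) i (Finset.mem_univ i)
  have h3 := (Ideal.add_mem_iff_left _ h2).1 h1
  refine cancel_reg x x hx hx (fun y hy => ?_) b _ h3
  have : y = x := by ext i; simpa using hy i
  rwa [this]

end QR

section Special

variable {R : Type u} [CommRing R]

/-- The linear forms `X_m - c_m X_{m-1}`. -/
def ell (X c : ℕ → R) : ℕ → R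
  | 0 => X 0
  | m + 1 => X (m + 1) - c (m + 1) * X m

/-- The ideal generated by `X_i^s (X_i - c_i X_{i-1})` for `i < m`. -/
def Jm (X c : ℕ → R) (s m : ℕ) : Ideal R := Ideal.span ((fun i => X i ^ s * ell X c i) '' Set.Iio m)

lemma Jm_mono (X c : ℕ → R) (s m : ℕ) : Jm X c s m ≤ Jm X c s (m + 1) :=
  Ideal.span_mono (Set.image_mono (Set.Iio_subset_Iio (Nat.le_succ m)))

lemma f_mem_Jm (X c : ℕ → R) (s m : ℕ) : X m ^ s * ell X c m ∈ Jm X c s (m + 1) :=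
  Ideal.subset_span ⟨m, by simp, rfl⟩

lemma prod_mem_pow (X : ℕ → R) (K : Ideal R) (hK : ∀ i, X i ∈ K) (b : ℕ → ℕ) (m : ℕ) :
    ∏ i ∈ Finset.range m, X i ^ b i ∈ K ^ (∑ i ∈ Finset.range m, b i) := by
  induction m with
  | zero => simp
  | succ m ih =>
    rw [Finset.prod_range_succ, Finset.sum_range_succ, pow_add]
    exact Ideal.mul_mem_mul ih (Ideal.pow_mem_pow (hK m) _)

lemma pow_sub_pow_mem {K : Ideal R} {a b : R} (ha : a ∈ K) (hb : b ∈ K) (e : ℕ) :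
    ∃ w ∈ K ^ e, a ^ (e + 1) - b ^ (e + 1) = (a - b) * w := by
  refine ⟨∑ i ∈ Finset.range (e + 1), a ^ i * b ^ (e + 1 - 1 - i), ?_, ?_⟩
  · refine Ideal.sum_mem _ fun i hi => ?_
    have hi' : i ≤ e := Nat.lt_succ_iff.1 (Finset.mem_range.1 hi)
    have : K ^ e = K ^ i * K ^ (e + 1 - 1 - i) := by
      rw [← pow_add]; congr 1; omega
    rw [this]
    exact Ideal.mul_mem_mul (Ideal.pow_mem_pow ha _) (Ideal.pow_mem_pow hb _)
  · rw [mul_comm]; exact ((Commute.all a b).geom_sum₂_mul (e + 1)).symm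

lemma prod_shift (X : ℕ → R) (b : ℕ → ℕ) (m e : ℕ) :
    ∏ i ∈ Finset.range (m + 1), X i ^ (Function.update b m (b m + e) i) =
      (∏ i ∈ Finset.range (m + 1), X i ^ b i) * X m ^ e := by
  rw [Finset.prod_range_succ, Finset.prod_range_succ, Function.update_self, pow_add]
  have : ∏ i ∈ Finset.range m, X i ^ (Function.update b m (b m + e) i) =
      ∏ i ∈ Finset.range m, X i ^ b i := by
    refine Finset.prod_congr rfl fun i hi => ?_
    rw [Function.update_of_ne (Finset.mem_range.1 hi).ne]
  rw [this]; ring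

lemma sum_shift_lt (b : ℕ → ℕ) (m e i : ℕ) (hi : i ≤ m) :
    ∑ l ∈ Finset.range i, (Function.update b m (b m + e) l) = ∑ l ∈ Finset.range i, b l := by
  refine Finset.sum_congr rfl fun l hl => ?_
  rw [Function.update_of_ne ((Finset.mem_range.1 hl).trans_le hi).ne]

lemma sum_shift (b : ℕ → ℕ) (m e : ℕ) :
    ∑ l ∈ Finset.range (m + 1), (Function.update b m (b m + e) l) =
      ∑ l ∈ Finset.range (m + 1), b l + e := by
  rw [Finset.sum_range_succ, Finset.sum_range_succ, sum_shift_lt _ _ _ _ le_rfl,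
    Function.update_self, add_assoc]

lemma pigeon (X c : ℕ → R) (s : ℕ) (K : Ideal R) (hK : ∀ i, X i ∈ K) (m : ℕ) :
    ∀ b : ℕ → ℕ, m * s + 1 ≤ ∑ i ∈ Finset.range m, b i →
      ∏ i ∈ Finset.range m, X i ^ b i ∈
        Jm X c s m * K ^ ((∑ i ∈ Finset.range m, b i) - (s + 1)) := by
  induction m with
  | zero => intro b hb; simp at hb
  | succ m ih =>
    intro b hb
    rw [Finset.sum_range_succ] at hb ⊢
    rw [Finset.prod_range_succ]
    have hms : (m + 1) * s = m * s + s := by ring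
    rcases le_or_gt (b m) s with h | h
    · have h1 := ih b (by omega)
      have hm : m ≠ 0 := by
        rintro rfl
        simp at hb; omega
      have h0 : s ≤ m * s := Nat.le_mul_of_pos_left s (Nat.pos_of_ne_zero hm)
      have e : (∑ i ∈ Finset.range m, b i) + b m - (s + 1) =
        ((∑ i ∈ Finset.range m, b i) - (s + 1)) + b m := by omega
      rw [e, pow_add, ← mul_assoc]
      refine Ideal.mul_mem_mul (Ideal.mul_mono_left (Jm_mono X c s m) h1)
        (Ideal.pow_mem_pow (hK m) _)
    · obtain ⟨e, he⟩ := Nat.exists_eq_add_of_lt h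
      rcases m with _ | m
      · simp only [Finset.range_zero, Finset.prod_empty, one_mul, Finset.sum_empty, zero_add] at *
        rw [he, show s + e + 1 - (s + 1) = e by omega, show s + e + 1 = s + 1 + e by ring, pow_add]
        refine Ideal.mul_mem_mul ?_ (Ideal.pow_mem_pow (hK 0) _)
        have := f_mem_Jm X c s 0
        simpa [ell, pow_succ] using this
      · set S := ∑ i ∈ Finset.range (m + 1), b i with hS
        obtain ⟨w, hw, hw'⟩ := pow_sub_pow_mem (hK (m + 1))
          (Ideal.mul_mem_left K (c (m + 1)) (hK m)) e
        have hsplit : (∏ i ∈ Finset.range (m + 1), X i ^ b i) * X (m + 1) ^ b (m + 1) =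
            (X (m + 1) ^ s * ell X c (m + 1)) * ((∏ i ∈ Finset.range (m + 1), X i ^ b i) * w)
            + c (m + 1) ^ (e + 1) * ((∏ i ∈ Finset.range (m + 1),
              X i ^ (Function.update b m (b m + (e + 1)) i)) * X (m + 1) ^ s) := by
          rw [he, prod_shift]
          simp only [ell]
          rw [show s + e + 1 = s + (e + 1) by ring, pow_add]
          rw [mul_pow] at hw'
          linear_combination (∏ i ∈ Finset.range (m + 1), X i ^ b i) * X (m + 1) ^ s * hw'
        rw [hsplit]
        refine Ideal.add_mem _ ?_ (Ideal.mul_mem_left _ _ ?_)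
        · refine Ideal.mul_mem_mul (f_mem_Jm X c s (m + 1)) ?_
          rw [show S + b (m + 1) - (s + 1) = S + e by omega, pow_add]
          exact Ideal.mul_mem_mul (prod_mem_pow X K hK b (m + 1)) hw
        · have h2 := ih (Function.update b m (b m + (e + 1))) (by rw [sum_shift]; omega)
          rw [sum_shift, ← hS] at h2
          have h0 : s ≤ (m + 1) * s := Nat.le_mul_of_pos_left s (Nat.succ_pos m)
          rw [show S + b (m + 1) - (s + 1) = (S + (e + 1) - (s + 1)) + s by omega, pow_add,
            ← mul_assoc]
          exact Ideal.mul_mem_mul (Ideal.mul_mono_left (Jm_mono X c s _) h2)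
            (Ideal.pow_mem_pow (hK _) _)

open Classical in
/-- The coefficient of a monomial of degree `m s` modulo `Jm`, w.r.t. `∏ X_i^s`. -/
noncomputable def phi (c : ℕ → R) (s m : ℕ) (b : ℕ → ℕ) : R :=
  if (∀ i ≤ m, ∑ l ∈ Finset.range i, b l ≤ i * s) then
    ∏ i ∈ Finset.range m, c i ^ (i * s - ∑ l ∈ Finset.range i, b l) else 0

lemma phi_step (c : ℕ → R) (s m e : ℕ) (b : ℕ → ℕ) (hb : b (m + 1) = s + e)
    (hs : ∑ i ∈ Finset.range (m + 2), b i = (m + 2) * s) :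
    phi c s (m + 2) b = c (m + 1) ^ e * phi c s (m + 1) (Function.update b m (b m + e)) := by
  have hS := sum_shift b m e
  rw [Finset.sum_range_succ] at hs
  have e2 : (m + 2) * s = m * s + s + s := by ring
  have e1 : (m + 1) * s = m * s + s := by ring
  unfold phi
  have hiff : (∀ i ≤ m + 2, ∑ l ∈ Finset.range i, b l ≤ i * s) ↔
      ∀ i ≤ m + 1, ∑ l ∈ Finset.range i, (Function.update b m (b m + e) l) ≤ i * s := by
    constructor
    · intro h i hi
      rcases Nat.lt_or_ge i (m + 1) with h1 | h1
      · rw [sum_shift_lt _ _ _ _ (by omega)]; exact h i (by omega)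
      · have : i = m + 1 := by omega
        subst this
        rw [hS]; omega
    · intro h i hi
      rcases Nat.lt_or_ge i (m + 1) with h1 | h1
      · rw [← sum_shift_lt b m e i (by omega)]; exact h i (by omega)
      · rcases Nat.lt_or_ge i (m + 2) with h2 | h2
        · have : i = m + 1 := by omega
          subst this; omega
        · have : i = m + 2 := by omega
          subst this
          rw [Finset.sum_range_succ]; omega
  simp only [hiff]
  split_ifs with h
  · rw [Finset.prod_range_succ, mul_comm]
    congr 1
    · congr 1; omega
    · refine Finset.prod_congr rfl fun i hi => ?_
      rw [sum_shift_lt _ _ _ _ (by have := Finset.mem_range.1 hi; omega)]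
  · simp

lemma exact_phi (X c : ℕ → R) (s : ℕ) (m : ℕ) :
    ∀ b : ℕ → ℕ, ∑ i ∈ Finset.range m, b i = m * s →
      ∏ i ∈ Finset.range m, X i ^ b i - phi c s m b * ∏ i ∈ Finset.range m, X i ^ s ∈
        Jm X c s m := by
  induction m with
  | zero => intro b hb; simp [phi]
  | succ m ih =>
    intro b hb
    rcases m with _ | m
    · have : b 0 = s := by simpa using hb
      have h2 : phi c s 1 b = 1 := by
        unfold phi
        rw [if_pos]
        · simp
        · intro i hi
          interval_cases i <;> simp [this]
      simp [h2, this]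
    · rcases Nat.lt_or_ge (b (m + 1)) s with h | h
      · have h1 := hb
        rw [Finset.sum_range_succ] at h1
        have e2 : (m + 1 + 1) * s = (m + 1) * s + s := by ring
        have h2 : phi c s (m + 1 + 1) b = 0 := by
          unfold phi
          rw [if_neg]
          intro hc
          have := hc (m + 1) (by omega)
          omega
        rw [h2, zero_mul, sub_zero, Finset.prod_range_succ]
        have h3 := pigeon X c s ⊤ (fun i => Submodule.mem_top) (m + 1) b (by omega)
        rw [Ideal.mul_comm] at h3
        have h4 : ∏ i ∈ Finset.range (m + 1), X i ^ b i ∈ Jm X c s (m + 1) := by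
          exact Ideal.mul_le_right h3
        exact Ideal.mul_mem_right _ _ (Jm_mono X c s (m + 1) h4)
      · obtain ⟨e, he⟩ := Nat.exists_eq_add_of_le h
        have hst := phi_step c s m e b he hb
        have h1 := ih (Function.update b m (b m + e)) (by
          rw [sum_shift]
          rw [Finset.sum_range_succ, he] at hb
          have e2 : (m + 1 + 1) * s = (m + 1) * s + s := by ring
          omega)
        rw [hst, Finset.prod_range_succ, he, Finset.prod_range_succ (n := m + 1)]
        rw [prod_shift] at h1
        have h2 := Ideal.mul_mem_left _ (c (m + 1) ^ e * X (m + 1) ^ s) (Jm_mono X c s (m + 1) h1)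
        have h3 : X (m + 1) ^ s * (X (m + 1) ^ e - (c (m + 1) * X m) ^ e) ∈
            Jm X c s (m + 1 + 1) := by
          obtain ⟨w, hw⟩ := sub_dvd_pow_sub_pow (X (m + 1)) (c (m + 1) * X m) e
          rw [hw, ← mul_assoc]
          exact Ideal.mul_mem_right _ _ (f_mem_Jm X c s (m + 1))
        have h4 := Ideal.mul_mem_left _ (∏ i ∈ Finset.range (m + 1), X i ^ b i) h3
        convert Ideal.add_mem _ h2 h4 using 1
        rw [pow_add, mul_pow]
        ring

end Special

section Special2

variable {R : Type u} [CommRing R]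

/-- Extension of a finite family by zero. -/
def ext0 {α : Type*} [Zero α] {g : ℕ} (x : Fin g → α) (i : ℕ) : α :=
  if h : i < g then x ⟨i, h⟩ else 0

lemma ext0_fin {α : Type*} [Zero α] {g : ℕ} (x : Fin g → α) (i : Fin g) : ext0 x i = x i := by
  simp [ext0]

/-- The special ideals. -/
def SJ {g : ℕ} (x : Fin g → R) (c : ℕ → R) (s : ℕ) : Ideal R := Jm (ext0 x) c s g

/-- The linear forms of a special ideal. -/
def lf {g : ℕ} (x : Fin g → R) (c : ℕ → R) (i : Fin g) : R := ell (ext0 x) c i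

lemma SJ_eq {g : ℕ} (x : Fin g → R) (c : ℕ → R) (s : ℕ) :
    SJ x c s = Ideal.span (Set.range fun i => x i ^ s * lf x c i) := by
  unfold SJ Jm
  congr 1
  ext z
  constructor
  · rintro ⟨i, hi, rfl⟩
    have hi : i < g := hi
    exact ⟨⟨i, hi⟩, by simp [lf, ext0, hi]⟩
  · rintro ⟨i, rfl⟩
    exact ⟨i, Set.mem_Iio.2 i.2, by simp only [lf, ext0_fin]⟩

lemma lf_sub_mem {g : ℕ} (x : Fin g → R) (c : ℕ → R) (i : Fin g) :
    lf x c i - x i ∈ Ideal.span (x '' Set.Iio i) := by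
  obtain ⟨i, hi⟩ := i
  rcases i with _ | i
  · simp [lf, ell, ext0, hi]
  · have hi' : i < g := by omega
    have : lf x c ⟨i + 1, hi⟩ - x ⟨i + 1, hi⟩ = - (c (i + 1)) * x ⟨i, hi'⟩ := by
      simp [lf, ell, ext0, hi, hi']
    rw [this]
    exact Ideal.mul_mem_left _ _ (Ideal.subset_span ⟨⟨i, hi'⟩, by simp, rfl⟩)

lemma span_lf {g : ℕ} [IsNoetherianRing R] [IsLocalRing R] (x : Fin g → R) (c : ℕ → R) :
    Ideal.span (Set.range (lf x c)) = Ideal.span (Set.range x) := by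
  rw [← Set.image_univ, ← Set.image_univ]
  exact span_triangular (lf_sub_mem x c) _ isLowerSet_univ

lemma lf_mem {g : ℕ} [IsNoetherianRing R] [IsLocalRing R] (x : Fin g → R) (c : ℕ → R) (i : Fin g) :
    lf x c i ∈ Ideal.span (Set.range x) := by
  rw [← span_lf x c]
  exact Ideal.subset_span ⟨i, rfl⟩

lemma ext0_mem {g : ℕ} (x : Fin g → R) (i : ℕ) : ext0 x i ∈ Ideal.span (Set.range x) := by
  unfold ext0
  split_ifs with h
  · exact Ideal.subset_span ⟨_, rfl⟩
  · exact Ideal.zero_mem _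

lemma SJ_gen_mem {g : ℕ} [IsNoetherianRing R] [IsLocalRing R] (x : Fin g → R) (c : ℕ → R) (s : ℕ)
    (i : Fin g) : x i ^ s * lf x c i ∈ Ideal.span (Set.range x) ^ (s + 1) := by
  rw [pow_succ]
  exact Ideal.mul_mem_mul (Ideal.pow_mem_pow (Ideal.subset_span (Set.mem_range_self i)) _) (lf_mem x c i)

lemma prod_ext0 {g : ℕ} (x : Fin g → R) (b : Fin g → ℕ) :
    ∏ i ∈ Finset.range g, ext0 x i ^ ext0 b i = ∏ i, x i ^ b i := by
  rw [Finset.prod_range]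
  exact Finset.prod_congr rfl fun i _ => by rw [ext0_fin, ext0_fin]

lemma sum_ext0 {g : ℕ} (b : Fin g → ℕ) :
    ∑ i ∈ Finset.range g, ext0 b i = ∑ i, b i := by
  rw [Finset.sum_range]
  exact Finset.sum_congr rfl fun i _ => by rw [ext0_fin]

lemma SJ_le {g : ℕ} [IsNoetherianRing R] [IsLocalRing R] (x : Fin g → R) (c : ℕ → R) (s : ℕ) :
    SJ x c s ≤ Ideal.span (Set.range x) ^ (s + 1) := by
  rw [SJ_eq, Ideal.span_le]
  rintro _ ⟨i, rfl⟩
  exact SJ_gen_mem x c s i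

lemma SJ_isReduction {g : ℕ} [IsNoetherianRing R] [IsLocalRing R] (x : Fin g → R) (c : ℕ → R)
    (s : ℕ) : IsReduction (SJ x c s) (Ideal.span (Set.range x) ^ (s + 1)) := by
  refine ⟨SJ_le x c s, g, le_antisymm ?_ ?_⟩
  · rw [← pow_mul, ← pow_mul]
    intro z hz
    obtain ⟨P, hP, rfl⟩ := (Ideal.mem_span_pow_iff_exists_isHomogeneous _ _).1 hz
    rw [eval_eq_sum_univ]
    refine Ideal.sum_mem _ fun b hb => Ideal.mul_mem_left _ _ ?_
    have h1 := hom_sum hP (MvPolynomial.mem_support_iff.1 hb)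
    have h2 := pigeon (ext0 x) c s (Ideal.span (Set.range x)) (ext0_mem x) g (ext0 b) (by
      rw [sum_ext0, h1]; nlinarith)
    rw [prod_ext0, sum_ext0, h1, show (s + 1) * (g + 1) - (s + 1) = (s + 1) * g by
      rw [Nat.mul_succ]; omega] at h2
    exact h2
  · rw [pow_succ' (Ideal.span (Set.range x) ^ (s + 1))]
    exact Ideal.mul_mono_left (SJ_le x c s)

lemma SJ_mix {g : ℕ} [IsNoetherianRing R] [IsLocalRing R] {x : Fin g → R} (h : Reg x) (c : ℕ → R)
    (y : Fin g → R) (hy : ∀ i, y i = x i ∨ y i = lf x c i) : Reg y := by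
  refine h.triangular fun i => ?_
  rcases hy i with e | e
  · rw [e]; simp
  · rw [e]; exact lf_sub_mem x c i

lemma SJ_coeff {g : ℕ} [IsNoetherianRing R] [IsLocalRing R] {x : Fin g → R} (h : Reg x)
    (hx : ∀ i, x i ∈ maximalIdeal R) (σ : Equiv.Perm (Fin g)) (c : ℕ → R) (s : ℕ)
    (M : Finset (Fin g →₀ ℕ)) (hM : ∀ b ∈ M, ∑ i, b i = g * s) (p : (Fin g →₀ ℕ) → R)
    (hz : ∑ b ∈ M, p b * ∏ i, x i ^ b i ∈ SJ (x ∘ σ) c s) :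
    ∑ b ∈ M, p b * phi c s g (ext0 (b ∘ σ)) ∈ Ideal.span (Set.range x) := by
  have hr : Set.range (x ∘ σ) = Set.range x := σ.surjective.range_comp x
  set y := x ∘ σ with hy
  have hyR : Reg y := h.perm hx σ
  have hym : ∀ i, y i ∈ maximalIdeal R := fun i => hx (σ i)
  rw [← hr, ← span_lf y c]
  have hI : Ideal.span (Set.range y) ≤ maximalIdeal R := by
    rw [Ideal.span_le]; rintro _ ⟨i, rfl⟩; exact hym i
  refine cancel_reg y (lf y c) hym (fun i => hI (lf_mem y c i)) (SJ_mix hyR c) (fun _ => s) _ ?_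
  rw [← SJ_eq]
  have h2 : ∑ b ∈ M, p b * (∏ i, x i ^ b i - phi c s g (ext0 (b ∘ σ)) * ∏ i, y i ^ s) ∈
      SJ y c s := by
    refine Ideal.sum_mem _ fun b hb => Ideal.mul_mem_left _ _ ?_
    have h1 : ∑ i, (b ∘ σ) i = g * s := by
      rw [← hM b hb]; exact Equiv.sum_comp σ b
    have h3 := exact_phi (ext0 y) c s g (ext0 (b ∘ σ)) (by rw [sum_ext0, h1])
    rw [prod_ext0] at h3
    have h4 : ∏ i ∈ Finset.range g, ext0 y i ^ s = ∏ i, y i ^ s := by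
      rw [Finset.prod_range]
      exact Finset.prod_congr rfl fun i _ => by rw [ext0_fin]
    have h5 : ∏ i, y i ^ (b ∘ σ) i = ∏ i, x i ^ b i := by
      exact Equiv.prod_comp σ (fun i => x i ^ b i)
    rw [h4, h5] at h3
    exact h3
  have h5 := Ideal.sub_mem _ hz h2
  convert h5 using 1
  rw [Finset.sum_mul, ← Finset.sum_sub_distrib]
  exact Finset.sum_congr rfl fun b _ => by ring

end Special2

section Spanning

/-- The exponents of total degree `d`. -/
def Mon (g d : ℕ) : Finset (Fin g →₀ ℕ) := Finset.finsuppAntidiag Finset.univ d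

lemma mem_Mon {g d : ℕ} {b : Fin g →₀ ℕ} : b ∈ Mon g d ↔ ∑ i, b i = d := by
  simp [Mon, Finset.mem_finsuppAntidiag]

lemma card_Mon {g d : ℕ} (hg : 1 ≤ g) : (Mon g d).card = (g - 1 + d).choose (g - 1) := by
  rw [Mon, Finset.card_finsuppAntidiag_nat_eq_choose, Finset.card_univ, Fintype.card_fin,
    show g + d - 1 = g - 1 + d by omega, Nat.choose_symm_add]

/-- The ballot condition. -/
def Ballot (s m : ℕ) (b : ℕ → ℕ) : Prop := ∀ i ≤ m, ∑ l ∈ Finset.range i, b l ≤ i * s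

lemma ballot_of_mono {s m : ℕ} {b : ℕ → ℕ} (hb : ∀ i j, i ≤ j → j < m → b i ≤ b j)
    (hs : ∑ l ∈ Finset.range m, b l = m * s) : Ballot s m b := by
  intro i hi
  by_contra hcon
  push Not at hcon
  have h1 : ∀ n, i ≤ n → n ≤ m → n * s < ∑ l ∈ Finset.range n, b l := by
    intro n hn
    induction n, hn using Nat.le_induction with
    | base => intro _; exact hcon
    | succ n hn ih =>
      intro hnm
      have h2 := ih (by omega)
      rw [Finset.sum_range_succ, Nat.succ_mul]
      have h3 : s ≤ b n := by
        by_contra h4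
        push Not at h4
        have h5 : ∑ l ∈ Finset.range i, b l ≤ ∑ l ∈ Finset.range i, s := by
          refine Finset.sum_le_sum fun l hl => ?_
          have := hb l n (by have := Finset.mem_range.1 hl; omega) (by omega)
          omega
        simp at h5
        omega
      omega
  have := h1 m hi le_rfl
  omega

/-- The exponent vector of `phi`. -/
noncomputable def expo (s m : ℕ) (b : ℕ → ℕ) : ℕ →₀ ℕ :=
  ∑ i ∈ Finset.range m, Finsupp.single i (i * s - ∑ l ∈ Finset.range i, b l)

lemma expo_apply {s m : ℕ} {b : ℕ → ℕ} {i : ℕ} (hi : i < m) :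
    expo s m b i = i * s - ∑ l ∈ Finset.range i, b l := by
  rw [expo, Finsupp.finsetSum_apply, Finset.sum_eq_single i]
  · rw [Finsupp.single_eq_same]
  · intro l _ hl
    rw [Finsupp.single_eq_of_ne (Ne.symm hl)]
  · intro h
    exact absurd (Finset.mem_range.2 hi) h

lemma phi_X (k : Type u) [CommRing k] (s m : ℕ) (b : ℕ → ℕ) [Decidable (Ballot s m b)] :
    phi (fun i => (MvPolynomial.X i : MvPolynomial ℕ k)) s m b =
      if Ballot s m b then MvPolynomial.monomial (expo s m b) 1 else 0 := by
  by_cases h : Ballot s m b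
  · rw [if_pos h]
    unfold phi
    unfold Ballot at h
    rw [if_pos h, expo, MvPolynomial.monomial_sum_one]
    refine Finset.prod_congr rfl fun i _ => ?_
    rw [MvPolynomial.X_pow_eq_monomial]
  · rw [if_neg h]
    unfold phi
    unfold Ballot at h
    rw [if_neg h]

lemma map_phi {A : Type u} {B : Type v} [CommRing A] [CommRing B] (f : A →+* B) (c : ℕ → A)
    (s m : ℕ) (b : ℕ → ℕ) : f (phi c s m b) = phi (fun i => f (c i)) s m b := by
  unfold phi
  split_ifs with h
  · simp
  · simp

lemma expo_inj {s m : ℕ} {b b' : ℕ → ℕ} (hb : Ballot s m b) (hb' : Ballot s m b')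
    (hs : ∑ l ∈ Finset.range m, b l = ∑ l ∈ Finset.range m, b' l)
    (h : expo s m b = expo s m b') (i : ℕ) (hi : i < m) : b i = b' i := by
  have key : ∀ i ≤ m, ∑ l ∈ Finset.range i, b l = ∑ l ∈ Finset.range i, b' l := by
    intro i hi
    rcases hi.lt_or_eq with h1 | rfl
    · have h2 := DFunLike.congr_fun h i
      rw [expo_apply h1, expo_apply h1] at h2
      have := hb i hi
      have := hb' i hi
      omega
    · exact hs
  have h1 := key i hi.le
  have h2 := key (i + 1) hi
  rw [Finset.sum_range_succ, Finset.sum_range_succ] at h2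
  omega

variable {k : Type u} [Field k] [Infinite k]

/-- The vector of `phi`-coefficients attached to a permutation and parameters. -/
noncomputable def vec (g s : ℕ) (q : Equiv.Perm (Fin g) × (ℕ → k)) : Mon g (g * s) → k :=
  fun b => phi q.2 s g (ext0 (b.1 ∘ q.1))

lemma vec_span (g s : ℕ) : Submodule.span k (Set.range (vec (k := k) g s)) = ⊤ := by
  classical
  by_contra hne
  obtain ⟨f, hf0, hf⟩ := Submodule.exists_le_ker_of_lt_top _ (lt_top_iff_ne_top.2 hne)
  apply hf0
  refine LinearMap.pi_ext' fun b0 => LinearMap.ext_ring ?_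
  set p : Mon g (g * s) → k := fun b => f (Pi.single b 1) with hp
  have hfv : ∀ v, f v = ∑ b, p b * v b := by
    intro v
    conv_lhs => rw [pi_eq_sum_univ v]
    rw [map_sum]
    refine Finset.sum_congr rfl fun b _ => ?_
    rw [map_smul, smul_eq_mul, mul_comm, hp]
    congr 2
    ext l; simp [Pi.single_apply, eq_comm]
  have hz : ∀ q, ∑ b, p b * vec g s q b = 0 := by
    intro q
    rw [← hfv]
    exact hf (Submodule.subset_span ⟨q, rfl⟩)
  let σ := Tuple.sort (b0.1 : Fin g → ℕ)
  have hmono : Monotone (b0.1 ∘ σ) := Tuple.monotone_sort _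
  have hsum : ∀ b : Mon g (g * s), ∑ l ∈ Finset.range g, ext0 (b.1 ∘ σ) l = g * s := by
    intro b
    rw [sum_ext0]
    exact (Equiv.sum_comp σ b.1).trans (mem_Mon.1 b.2)
  have hbal : Ballot s g (ext0 (b0.1 ∘ σ)) := by
    refine ballot_of_mono ?_ (hsum b0)
    intro i j hij hj
    have hi : i < g := by omega
    simp only [ext0, hi, hj, dif_pos]
    exact hmono (Fin.mk_le_mk.2 hij)
  have hpoly : ∑ b, MvPolynomial.C (p b) *
      phi (fun i => (MvPolynomial.X i : MvPolynomial ℕ k)) s g (ext0 (b.1 ∘ σ)) = 0 := by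
    refine MvPolynomial.funext fun c => ?_
    rw [map_sum, map_zero, ← hz (σ, c)]
    refine Finset.sum_congr rfl fun b _ => ?_
    rw [map_mul, MvPolynomial.eval_C, map_phi]
    simp [vec]
  have hc := congrArg (MvPolynomial.coeff (expo s g (ext0 (b0.1 ∘ σ)))) hpoly
  rw [MvPolynomial.coeff_sum, MvPolynomial.coeff_zero, Finset.sum_eq_single b0] at hc
  · rw [phi_X, if_pos hbal, MvPolynomial.coeff_C_mul, MvPolynomial.coeff_monomial, if_pos rfl,
      mul_one] at hc
    simpa [hp] using hc
  · intro b _ hb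
    rw [phi_X, MvPolynomial.coeff_C_mul]
    split_ifs with h1
    · rw [MvPolynomial.coeff_monomial, if_neg, mul_zero]
      intro h2
      apply hb
      have h3 := expo_inj h1 hbal ((hsum b).trans (hsum b0).symm) h2
      ext i
      have h4 := h3 (σ.symm i) (σ.symm i).2
      rw [ext0_fin, ext0_fin] at h4
      simpa using h4
    · simp
  · simp

lemma exists_invertible (g s : ℕ) : ∃ q : Mon g (g * s) → Equiv.Perm (Fin g) × (ℕ → k),
    IsUnit (Matrix.of (fun i b => vec g s (q i) b) : Matrix (Mon g (g * s)) (Mon g (g * s)) k) := by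
  classical
  obtain ⟨κ, a, ha, hs, hl⟩ := exists_linearIndependent' k (vec (k := k) g s)
  rw [vec_span] at hs
  let B := Module.Basis.mk hl hs.ge
  let e : Mon g (g * s) ≃ κ := (Pi.basisFun k (Mon g (g * s))).indexEquiv B
  refine ⟨a ∘ e, ?_⟩
  rw [← Matrix.linearIndependent_rows_iff_isUnit]
  exact hl.comp e e.injective

end Spanning

section Inter

variable {R : Type u} [CommRing R] [IsNoetherianRing R] [IsLocalRing R]

lemma eval_eq_sum_Mon {g d : ℕ} (x : Fin g → R) {P : MvPolynomial (Fin g) R}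
    (hP : P.IsHomogeneous d) :
    MvPolynomial.eval x P = ∑ b ∈ Mon g d, P.coeff b * ∏ i, x i ^ b i := by
  rw [eval_eq_sum_univ]
  refine Finset.sum_subset ?_ ?_
  · intro b hb
    exact mem_Mon.2 (hom_sum hP (MvPolynomial.mem_support_iff.1 hb))
  · intro b _ hb
    rw [MvPolynomial.notMem_support_iff.1 hb, zero_mul]

lemma exists_special {g : ℕ} (hg : 1 ≤ g) [Infinite (ResidueField R)] {x : Fin g → R} (h : Reg x)
    (hx : ∀ i, x i ∈ maximalIdeal R) (s : ℕ) :
    ∃ q : Mon g (g * s) → Equiv.Perm (Fin g) × (ℕ → R),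
      ⨅ i, SJ (x ∘ (q i).1) (q i).2 s ≤ Ideal.span (Set.range x) ^ (g * s + 1) := by
  classical
  obtain ⟨q, hq⟩ := exists_invertible (k := ResidueField R) g s
  choose c hc using fun i l => IsLocalRing.residue_surjective ((q i).2 l)
  refine ⟨fun i => ((q i).1, c i), ?_⟩
  set I := Ideal.span (Set.range x) with hI
  set W : Matrix (Mon g (g * s)) (Mon g (g * s)) R :=
    Matrix.of fun i b => phi (c i) s g (ext0 (b.1 ∘ (q i).1)) with hW
  have hWu : IsUnit W := by
    rw [Matrix.isUnit_iff_isUnit_det] at hq ⊢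
    have h1 : residue R W.det = (Matrix.of (fun i b => vec g s (q i) b) :
        Matrix (Mon g (g * s)) (Mon g (g * s)) (ResidueField R)).det := by
      rw [RingHom.map_det]
      congr 1
      ext i b
      simp only [hW, RingHom.mapMatrix_apply, Matrix.map_apply, Matrix.of_apply, vec]
      rw [map_phi]
      simp only [hc]
    by_contra hnu
    have h2 : residue R W.det = 0 := (residue_eq_zero_iff _).2 hnu
    rw [h1] at h2
    exact hq.ne_zero h2
  have key : ∀ P : MvPolynomial (Fin g) R, P.IsHomogeneous (g * s) →
      MvPolynomial.eval x P ∈ ⨅ i, SJ (x ∘ (q i).1) (c i) s → ∀ b, P.coeff b ∈ I := by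
    intro P hP hz b0
    by_cases hb0 : P.coeff b0 = 0
    · rw [hb0]; exact Ideal.zero_mem _
    have hbM : b0 ∈ Mon g (g * s) := mem_Mon.2 (hom_sum hP hb0)
    have h1 : ∀ i, (W.mulVec fun b => P.coeff b.1) i ∈ I := by
      intro i
      have hz' := (Ideal.mem_iInf.1 hz) i
      rw [eval_eq_sum_Mon x hP] at hz'
      have := SJ_coeff h hx (q i).1 (c i) s _ (fun b hb => mem_Mon.1 hb) (fun b => P.coeff b) hz'
      rw [← Finset.sum_coe_sort] at this
      simpa [Matrix.mulVec, dotProduct, hW, mul_comm] using this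
    have h2 : (fun b : Mon g (g * s) => P.coeff b.1) =
        W⁻¹.mulVec (W.mulVec fun b => P.coeff b.1) := by
      rw [Matrix.mulVec_mulVec, Matrix.nonsing_inv_mul _ ((Matrix.isUnit_iff_isUnit_det _).1 hWu),
        Matrix.one_mulVec]
    have h3 := congrFun h2 ⟨b0, hbM⟩
    simp only at h3
    rw [h3]
    rw [Matrix.mulVec]
    exact Ideal.sum_mem _ fun i _ => Ideal.mul_mem_left _ _ (h1 i)
  intro z hz
  suffices H : ∀ d ≤ g * s + 1, z ∈ I ^ d from H _ le_rfl
  intro d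
  induction d with
  | zero => intro _; simp
  | succ d ih =>
    intro hd
    obtain ⟨P, hP, hPz⟩ := (Ideal.mem_span_pow_iff_exists_isHomogeneous _ _).1 (ih (by omega))
    let i0 : Fin g := ⟨0, hg⟩
    have hcoef : ∀ b, P.coeff b ∈ I := by
      intro b
      have h1 := key (P * MvPolynomial.X i0 ^ (g * s - d)) (by
          have := hP.mul ((MvPolynomial.isHomogeneous_X R i0).pow (g * s - d))
          rwa [show d + 1 * (g * s - d) = g * s by omega] at this)
        (by rw [map_mul, hPz]; exact Ideal.mul_mem_right _ _ hz)
        (b + Finsupp.single i0 (g * s - d))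
      rwa [MvPolynomial.X_pow_eq_monomial, MvPolynomial.coeff_mul_monomial, mul_one] at h1
    rw [← hPz, eval_eq_sum_Mon x hP, pow_succ']
    refine Ideal.sum_mem _ fun b hb => Ideal.mul_mem_mul (hcoef b) ?_
    rw [Ideal.mem_span_pow_iff_exists_isHomogeneous]
    refine ⟨MvPolynomial.monomial b 1, MvPolynomial.isHomogeneous_monomial _ ?_, ?_⟩
    · rw [Finsupp.degree_eq_sum]; exact mem_Mon.1 hb
    · rw [MvPolynomial.eval_monomial, one_mul, Finsupp.prod_fintype _ _ (by simp)]

end Inter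

section RegPoly

open RingTheory.Sequence CategoryTheory Abelian Limits

lemma reg_X (k : Type u) [CommRing k] [Nontrivial k] (g : ℕ) :
    Reg (fun i : Fin g => (MvPolynomial.X i : MvPolynomial (Fin g) k)) := by
  rw [reg_iff]
  intro i a ha
  rw [MvPolynomial.mem_ideal_span_X_image] at ha ⊢
  intro m hm
  obtain ⟨l, hl, hne⟩ := ha (m + Finsupp.single i 1) (by
    rw [MvPolynomial.mem_support_iff] at hm ⊢
    rwa [mul_comm, MvPolynomial.coeff_mul_X])
  refine ⟨l, hl, ?_⟩
  have : l ≠ i := ne_of_lt hl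
  simpa [Finsupp.single_apply, this.symm] using hne

lemma exists_regular_in_subspace {k B : Type u} [Field k] [Infinite k] [CommRing B] [Algebra k B]
    [IsNoetherianRing B] (m : Ideal B) (V : Submodule k B) (D : ℕ)
    (hV : m ^ D ≤ Ideal.span (V : Set B)) (n : ℕ) :
    ∀ (M : ModuleCat.{u} B) [Module.Finite B M],
      (∀ i < n, Subsingleton (Ext (ModuleCat.of B (B ⧸ m)) M i)) →
      ∃ rs : List B, rs.length = n ∧ (∀ r ∈ rs, r ∈ V) ∧ IsWeaklyRegular M rs := by
  induction n with
  | zero => intro M _ _; exact ⟨[], rfl, by simp, .nil _ _⟩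
  | succ n ih =>
    intro M _ h_ext
    have h1 : Subsingleton (ModuleCat.of B (B ⧸ m) ⟶ M) :=
      Ext.addEquiv₀.subsingleton_congr.mp (h_ext 0 n.zero_lt_succ)
    have h2 : Subsingleton ((B ⧸ m) →ₗ[B] M) :=
      (ModuleCat.homAddEquiv (M := ModuleCat.of B (B ⧸ m)) (N := M)).symm.subsingleton
    obtain ⟨y, mem_ann, hy⟩ := IsSMulRegular.subsingleton_linearMap_iff.mp h2
    rw [Ideal.annihilator_quotient] at mem_ann
    have h3 : ∃ F ∈ V, IsSMulRegular M F := by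
      by_contra hcon
      push Not at hcon
      have hass := biUnion_associatedPrimes_eq_compl_regular B M
      have hcov : ∀ F ∈ V, ∃ p ∈ associatedPrimes B M, F ∈ p := by
        intro F hF
        have : F ∈ ({r : B | IsSMulRegular M r} : Set B)ᶜ := hcon F hF
        rw [← hass] at this
        simpa using this
      have hfin : (associatedPrimes B M).Finite := associatedPrimes.finite B M
      have : Finite (associatedPrimes B M) := hfin
      obtain ⟨p, hp⟩ := Subspace.exists_eq_top_of_iUnion_eq_univ
        (k := k) (E := V) (p := fun p : associatedPrimes B M =>
          (Submodule.restrictScalars k p.1).comap V.subtype) (by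
          ext F
          simp only [Set.mem_iUnion, Set.mem_univ, iff_true]
          obtain ⟨p, hp, hF⟩ := hcov F F.2
          exact ⟨⟨p, hp⟩, hF⟩)
      have hVp : Ideal.span (V : Set B) ≤ p.1 := by
        rw [Ideal.span_le]
        intro F hF
        have : (⟨F, hF⟩ : V) ∈ (Submodule.restrictScalars k p.1).comap V.subtype := by
          rw [hp]; trivial
        exact this
      have hprime : p.1.IsPrime := p.2.isPrime
      have hyp : y ∈ p.1 := hprime.mem_of_pow_mem D (hVp (hV (Ideal.pow_mem_pow mem_ann D)))
      have : y ∈ ({r : B | IsSMulRegular M r} : Set B)ᶜ := by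
        rw [← hass]
        simp only [Set.mem_iUnion]
        exact ⟨p.1, p.2, hyp⟩
      exact this hy
    obtain ⟨F, hFV, hF⟩ := h3
    have h_ext' : ∀ i < n, Subsingleton
        (Ext (ModuleCat.of B (B ⧸ m)) (ModuleCat.of B (QuotSMulTop F M)) i) := by
      intro i hi
      have zero1 := AddCommGrpCat.isZero_of_iff_subsingleton.mpr (h_ext i (by omega))
      have zero2 := AddCommGrpCat.isZero_of_iff_subsingleton.mpr (h_ext (i + 1) (by omega))
      exact AddCommGrpCat.subsingleton_of_isZero <| ShortComplex.Exact.isZero_of_both_zeros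
        ((Ext.covariant_sequence_exact₃' _ hF.smulShortComplex_shortExact) i (i + 1) rfl)
        (zero1.eq_zero_of_src _) (zero2.eq_zero_of_tgt _)
    obtain ⟨rs, len, mem, reg⟩ := ih (ModuleCat.of B (QuotSMulTop F M)) h_ext'
    refine ⟨F :: rs, by simp [len], ?_, ?_⟩
    · intro r hr
      rcases List.mem_cons.1 hr with rfl | h
      · exact hFV
      · exact mem r h
    · exact (isWeaklyRegular_cons_iff M F rs).2 ⟨hF, reg⟩

lemma exists_regular_poly {k : Type u} [Field k] [Infinite k] {g : ℕ}
    (V : Submodule k (MvPolynomial (Fin g) k)) (D : ℕ)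
    (hV : (Ideal.span (Set.range (MvPolynomial.X : Fin g → MvPolynomial (Fin g) k))) ^ D ≤
      Ideal.span (V : Set (MvPolynomial (Fin g) k))) :
    ∃ fs : List (MvPolynomial (Fin g) k), fs.length = g ∧ (∀ f ∈ fs, f ∈ V) ∧
      IsWeaklyRegular (MvPolynomial (Fin g) k) fs := by
  set m := Ideal.span (Set.range (MvPolynomial.X : Fin g → MvPolynomial (Fin g) k)) with hm
  have hmt : m ≠ ⊤ := by
    intro h
    have h1 : m ≤ RingHom.ker (MvPolynomial.constantCoeff (R := k) (σ := Fin g)) := by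
      rw [hm, Ideal.span_le]
      rintro _ ⟨i, rfl⟩
      simp
    have h2 : (1 : MvPolynomial (Fin g) k) ∈ m := by rw [h]; trivial
    have := h1 h2
    simp at this
  have hlt : m • (⊤ : Submodule (MvPolynomial (Fin g) k) (ModuleCat.of (MvPolynomial (Fin g) k)
      (MvPolynomial (Fin g) k))) < ⊤ := by
    have : m • (⊤ : Submodule (MvPolynomial (Fin g) k) (MvPolynomial (Fin g) k)) = m := by simp
    exact lt_top_iff_ne_top.2 (fun h => hmt (this.symm.trans h))
  have hofl : Ideal.ofList (List.ofFn (fun i : Fin g => (MvPolynomial.X i :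
      MvPolynomial (Fin g) k))) = m := by
    unfold Ideal.ofList
    rw [hm]; congr 1; ext z; simp
  have hreg : IsRegular (MvPolynomial (Fin g) k) (List.ofFn (fun i : Fin g =>
      (MvPolynomial.X i : MvPolynomial (Fin g) k))) :=
    ⟨reg_X k g, by rw [hofl]; exact hlt.ne'⟩
  have hext := ModuleCat.subsingleton_ext_of_exists_isRegular m
    (ModuleCat.of (MvPolynomial (Fin g) k) (MvPolynomial (Fin g) k ⧸ m))
    (by
      rw [Module.support_eq_zeroLocus]
      erw [Ideal.annihilator_quotient])
    (ModuleCat.of (MvPolynomial (Fin g) k) (MvPolynomial (Fin g) k)) hlt _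
    (by
      intro r hr
      simp only [List.mem_ofFn] at hr
      obtain ⟨i, rfl⟩ := hr
      exact Ideal.subset_span (Set.mem_range_self i)) hreg
  rw [List.length_ofFn] at hext
  exact exists_regular_in_subspace m V D hV g
    (ModuleCat.of (MvPolynomial (Fin g) k) (MvPolynomial (Fin g) k)) hext

end RegPoly

section Hilbert

open MvPolynomial RingTheory.Sequence

variable {k : Type u} [Field k] {g : ℕ}

lemma homSub_eq_span (g d : ℕ) : homogeneousSubmodule (Fin g) k d =
    Submodule.span k (Set.range fun b : Mon g d => (monomial b.1 1 : MvPolynomial (Fin g) k)) := by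
  apply le_antisymm
  · intro P hP
    rw [P.as_sum]
    refine Submodule.sum_mem _ fun b hb => ?_
    have h1 : b ∈ Mon g d := mem_Mon.2 (hom_sum hP (mem_support_iff.1 hb))
    have h2 : monomial b (P.coeff b) = P.coeff b • (monomial b 1 : MvPolynomial (Fin g) k) := by
      rw [smul_monomial, smul_eq_mul, mul_one]
    rw [h2]
    exact Submodule.smul_mem _ _ (Submodule.subset_span ⟨⟨b, h1⟩, rfl⟩)
  · rw [Submodule.span_le]
    rintro _ ⟨b, rfl⟩
    refine isHomogeneous_monomial _ ?_
    rw [Finsupp.degree_eq_sum]; exact mem_Mon.1 b.2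

instance homSub_finite (g d : ℕ) : FiniteDimensional k (homogeneousSubmodule (Fin g) k d) := by
  rw [homSub_eq_span]
  exact FiniteDimensional.span_of_finite k (Set.finite_range _)

lemma finrank_homSub (g d : ℕ) :
    Module.finrank k (homogeneousSubmodule (Fin g) k d) = (Mon g d).card := by
  rw [homSub_eq_span]
  have h : LinearIndependent k fun b : Mon g d => (monomial b.1 1 : MvPolynomial (Fin g) k) := by
    have := (basisMonomials (Fin g) k).linearIndependent.comp (fun b : Mon g d => b.1)
      Subtype.val_injective
    simpa [Function.comp_def] using this
  rw [finrank_span_eq_card h, Fintype.card_coe]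

lemma hc_mul {F : MvPolynomial (Fin g) k} {j : ℕ} (hF : F.IsHomogeneous j)
    (c : MvPolynomial (Fin g) k) (d : ℕ) :
    homogeneousComponent (d + j) (c * F) = homogeneousComponent d c * F := by
  ext b
  rw [coeff_homogeneousComponent, coeff_mul, coeff_mul]
  have h : ∀ y : (Fin g →₀ ℕ) × (Fin g →₀ ℕ), y ∈ Finset.HasAntidiagonal.antidiagonal b → coeff y.2 F ≠ 0 →
      (b.degree = y.1.degree + j) := by
    intro y hy hne
    rw [Finset.HasAntidiagonal.mem_antidiagonal] at hy
    have := hom_sum hF hne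
    rw [← hy, map_add]
    rw [← Finsupp.degree_eq_sum] at this
    rw [this]
  split_ifs with hb
  · refine Finset.sum_congr rfl fun y hy => ?_
    by_cases hne : coeff y.2 F = 0
    · rw [hne, mul_zero, mul_zero]
    · rw [coeff_homogeneousComponent, if_pos]
      have := h y hy hne
      omega
  · symm
    refine Finset.sum_eq_zero fun y hy => ?_
    by_cases hne : coeff y.2 F = 0
    · rw [hne, mul_zero]
    · rw [coeff_homogeneousComponent, if_neg, zero_mul]
      have := h y hy hne
      omega

lemma hc_mul_lt {F : MvPolynomial (Fin g) k} {j : ℕ} (hF : F.IsHomogeneous j)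
    (c : MvPolynomial (Fin g) k) (d : ℕ) (hd : d < j) :
    homogeneousComponent d (c * F) = 0 := by
  ext b
  rw [coeff_homogeneousComponent, coeff_zero]
  split_ifs with hb
  · rw [coeff_mul]
    refine Finset.sum_eq_zero fun y hy => ?_
    by_cases hne : coeff y.2 F = 0
    · rw [hne, mul_zero]
    · rw [Finset.HasAntidiagonal.mem_antidiagonal] at hy
      have := hom_sum hF hne
      rw [← hy, map_add] at hb
      rw [← Finsupp.degree_eq_sum] at this
      omega
  · rfl

/-- An ideal is homogeneous if it is closed under taking homogeneous components. -/
def HomIdeal (a : Ideal (MvPolynomial (Fin g) k)) : Prop :=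
  ∀ p ∈ a, ∀ d, homogeneousComponent d p ∈ a

/-- The degree `d` part of an ideal. -/
noncomputable def part (a : Ideal (MvPolynomial (Fin g) k)) (d : ℕ) :
    Submodule k (MvPolynomial (Fin g) k) :=
  Submodule.restrictScalars k a ⊓ homogeneousSubmodule (Fin g) k d

lemma mem_part {a : Ideal (MvPolynomial (Fin g) k)} {d : ℕ} {p : MvPolynomial (Fin g) k} :
    p ∈ part a d ↔ p ∈ a ∧ p.IsHomogeneous d := Iff.rfl

instance part_finite (a : Ideal (MvPolynomial (Fin g) k)) (d : ℕ) :
    FiniteDimensional k (part a d) :=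
  Submodule.finiteDimensional_of_le (S₂ := homogeneousSubmodule (Fin g) k d) inf_le_right

lemma hc_self {p : MvPolynomial (Fin g) k} {d : ℕ} (hp : p.IsHomogeneous d) :
    homogeneousComponent d p = p := by
  rw [homogeneousComponent_of_mem hp, if_pos rfl]

lemma homIdeal_sup {a : Ideal (MvPolynomial (Fin g) k)} (ha : HomIdeal a)
    {F : MvPolynomial (Fin g) k} {j : ℕ} (hF : F.IsHomogeneous j) :
    HomIdeal (a ⊔ Ideal.span {F}) := by
  intro p hp d
  obtain ⟨y, hy, z, hz, rfl⟩ := Submodule.mem_sup.1 hp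
  obtain ⟨c, rfl⟩ := Ideal.mem_span_singleton'.1 hz
  rw [map_add]
  refine Ideal.add_mem _ (Ideal.mem_sup_left (ha y hy d)) (Ideal.mem_sup_right ?_)
  rcases Nat.lt_or_ge d j with h | h
  · rw [hc_mul_lt hF c d h]; exact Ideal.zero_mem _
  · obtain ⟨e, rfl⟩ := Nat.exists_eq_add_of_le' h
    rw [hc_mul hF]
    exact Ideal.mul_mem_left _ _ (Ideal.subset_span rfl)

lemma part_sup_lt {a : Ideal (MvPolynomial (Fin g) k)} (ha : HomIdeal a)
    {F : MvPolynomial (Fin g) k} {j : ℕ} (hF : F.IsHomogeneous j) (d : ℕ) (hd : d < j) :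
    part (a ⊔ Ideal.span {F}) d = part a d := by
  ext p
  rw [mem_part, mem_part]
  constructor
  · rintro ⟨hp, hh⟩
    refine ⟨?_, hh⟩
    obtain ⟨y, hy, z, hz, rfl⟩ := Submodule.mem_sup.1 hp
    obtain ⟨c, rfl⟩ := Ideal.mem_span_singleton'.1 hz
    rw [← hc_self hh, map_add, hc_mul_lt hF c d hd, add_zero]
    exact ha y hy d
  · rintro ⟨hp, hh⟩
    exact ⟨Ideal.mem_sup_left hp, hh⟩

lemma finrank_map_inj {V W : Type*} [AddCommGroup V] [Module k V] [AddCommGroup W] [Module k W]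
    (f : V →ₗ[k] W) (hf : Function.Injective f) (S : Submodule k V) :
    Module.finrank k (S.map f) = Module.finrank k S :=
  (LinearEquiv.finrank_eq (Submodule.equivMapOfInjective f hf S)).symm

lemma part_sup_add {a : Ideal (MvPolynomial (Fin g) k)} (ha : HomIdeal a)
    {F : MvPolynomial (Fin g) k} {j : ℕ} (hF : F.IsHomogeneous j) (hat : a ≠ ⊤)
    (hreg : ∀ c, F * c ∈ a → c ∈ a) (d : ℕ) :
    Module.finrank k (part (a ⊔ Ideal.span {F}) (d + j)) + Module.finrank k (part a d) =
      Module.finrank k (part a (d + j)) +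
        Module.finrank k (homogeneousSubmodule (Fin g) k d) := by
  have hF0 : F ≠ 0 := by
    rintro rfl
    exact hat ((Ideal.eq_top_iff_one _).2 (hreg 1 (by simp)))
  let f : MvPolynomial (Fin g) k →ₗ[k] MvPolynomial (Fin g) k := LinearMap.mulRight k F
  have hf : Function.Injective f := fun a b h => mul_right_cancel₀ hF0 h
  have h1 : part (a ⊔ Ideal.span {F}) (d + j) =
      part a (d + j) ⊔ (homogeneousSubmodule (Fin g) k d).map f := by
    apply le_antisymm
    · rintro p ⟨hp, hh⟩
      obtain ⟨y, hy, z, hz, rfl⟩ := Submodule.mem_sup.1 hp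
      obtain ⟨c, rfl⟩ := Ideal.mem_span_singleton'.1 hz
      rw [← hc_self hh, map_add, hc_mul hF]
      refine Submodule.add_mem_sup ?_ ?_
      · exact mem_part.2 ⟨ha y hy _, homogeneousComponent_isHomogeneous _ _⟩
      · exact ⟨_, homogeneousComponent_isHomogeneous _ _, rfl⟩
    · refine sup_le ?_ ?_
      · rintro p hp
        exact mem_part.2 ⟨Ideal.mem_sup_left hp.1, hp.2⟩
      · rintro _ ⟨c, hc, rfl⟩
        refine mem_part.2 ⟨Ideal.mem_sup_right (Ideal.mul_mem_left _ _ (Ideal.subset_span rfl)), ?_⟩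
        exact IsHomogeneous.mul hc hF
  have h2 : part a (d + j) ⊓ (homogeneousSubmodule (Fin g) k d).map f = (part a d).map f := by
    apply le_antisymm
    · rintro _ ⟨hp, c, hc, rfl⟩
      refine ⟨c, mem_part.2 ⟨hreg c ?_, hc⟩, rfl⟩
      rw [mul_comm]; exact hp.1
    · rintro _ ⟨c, hc, rfl⟩
      exact ⟨mem_part.2 ⟨Ideal.mul_mem_right _ _ hc.1, IsHomogeneous.mul hc.2 hF⟩, c, hc.2, rfl⟩
  have h3 := Submodule.finrank_sup_add_finrank_inf_eq (part a (d + j))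
    ((homogeneousSubmodule (Fin g) k d).map f)
  rw [← h1, h2, finrank_map_inj f hf, finrank_map_inj f hf] at h3
  exact h3

/-- The Hilbert function of the quotient. -/
noncomputable def Hf (a : Ideal (MvPolynomial (Fin g) k)) (d : ℕ) : ℤ :=
  (Mon g d).card - Module.finrank k (part a d)

lemma Hf_series {a : Ideal (MvPolynomial (Fin g) k)} (ha : HomIdeal a)
    {F : MvPolynomial (Fin g) k} {j : ℕ} (hF : F.IsHomogeneous j) (hat : a ≠ ⊤)
    (hreg : ∀ c, F * c ∈ a → c ∈ a) :
    PowerSeries.mk (Hf (a ⊔ Ideal.span {F})) =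
      PowerSeries.mk (Hf a) * (1 - PowerSeries.X ^ j) := by
  ext d
  rw [mul_sub, mul_one, map_sub, PowerSeries.coeff_mul_X_pow', PowerSeries.coeff_mk,
    PowerSeries.coeff_mk]
  split_ifs with h
  · obtain ⟨e, rfl⟩ := Nat.exists_eq_add_of_le' h
    rw [Nat.add_sub_cancel, PowerSeries.coeff_mk]
    have h1 := part_sup_add ha hF hat hreg e
    rw [finrank_homSub] at h1
    unfold Hf
    omega
  · rw [sub_zero]
    unfold Hf
    rw [part_sup_lt ha hF d (by omega)]

lemma Hf_bot_series (hg : 1 ≤ g) :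
    PowerSeries.mk (Hf (⊥ : Ideal (MvPolynomial (Fin g) k))) * (1 - PowerSeries.X) ^ g = 1 := by
  have h1 : Hf (⊥ : Ideal (MvPolynomial (Fin g) k)) =
      fun n => (((g - 1 + n).choose (g - 1) : ℕ) : ℤ) := by
    ext d
    have h2 : part (⊥ : Ideal (MvPolynomial (Fin g) k)) d = ⊥ := by
      rw [eq_bot_iff]
      rintro p ⟨hp, _⟩
      exact hp
    unfold Hf
    rw [h2, card_Mon hg]
    simp
  have h3 := PowerSeries.mk_add_choose_mul_one_sub_pow_eq_one ℤ (g - 1)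
  rw [h1]
  rwa [show g - 1 + 1 = g by omega] at h3

lemma take_facts {s : ℕ} (fs : List (MvPolynomial (Fin g) k))
    (hh : ∀ f ∈ fs, f.IsHomogeneous (s + 1)) (hreg : IsWeaklyRegular (MvPolynomial (Fin g) k) fs)
    (m : ℕ) (hm : m ≤ fs.length) :
    HomIdeal (Ideal.ofList (fs.take m)) ∧
    PowerSeries.mk (Hf (Ideal.ofList (fs.take m))) =
      PowerSeries.mk (Hf (⊥ : Ideal (MvPolynomial (Fin g) k))) *
        (1 - PowerSeries.X ^ (s + 1)) ^ m ∧
    Module.finrank k (part (Ideal.ofList (fs.take m)) (s + 1)) = m ∧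
    Module.finrank k (part (Ideal.ofList (fs.take m)) 0) = 0 := by
  induction m with
  | zero =>
    have h2 : ∀ d, part (⊥ : Ideal (MvPolynomial (Fin g) k)) d = ⊥ := by
      intro d
      rw [eq_bot_iff]
      rintro p ⟨hp, _⟩
      exact hp
    have e : Ideal.ofList (fs.take 0) = ⊥ := by simp
    rw [e]
    refine ⟨?_, by simp, by rw [h2]; exact finrank_bot _ _, by rw [h2]; exact finrank_bot _ _⟩
    intro p hp d
    rw [Ideal.mem_bot] at hp
    rw [hp, map_zero]
    exact Ideal.zero_mem _
  | succ m ih =>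
    obtain ⟨i1, i2, i3, i4⟩ := ih (by omega)
    have hml : m < fs.length := by omega
    have e : Ideal.ofList (fs.take (m + 1)) =
        Ideal.ofList (fs.take m) ⊔ Ideal.span {fs[m]} := by
      rw [List.take_succ_eq_append_getElem hml, Ideal.ofList_append, Ideal.ofList_singleton]
    have hF := hh fs[m] (List.getElem_mem hml)
    have hr := (smulReg_iff _ _).1 (hreg.regular_mod_prev m hml)
    have hat : Ideal.ofList (fs.take m) ≠ ⊤ := by
      have h1 : Ideal.ofList (fs.take m) ≤ RingHom.ker (constantCoeff (R := k) (σ := Fin g)) := by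
        unfold Ideal.ofList
        rw [Ideal.span_le]
        intro f hf
        have hf' : f ∈ fs := List.mem_of_mem_take hf
        have := hh f hf'
        by_contra hne
        have h5 := hom_sum this (b := 0) hne
        simp at h5
      intro h
      have h2 : (1 : MvPolynomial (Fin g) k) ∈ Ideal.ofList (fs.take m) := by rw [h]; trivial
      have := h1 h2
      simp at this
    rw [e]
    refine ⟨homIdeal_sup i1 hF, ?_, ?_, ?_⟩
    · rw [Hf_series i1 hF hat hr, i2, mul_assoc, ← pow_succ]
    · have := part_sup_add i1 hF hat hr 0
      rw [finrank_homSub, i4, zero_add, i3] at this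
      have h0 : (Mon g 0).card = 1 := by
        have : Mon g 0 = {0} := by
          ext b
          rw [mem_Mon, Finset.sum_eq_zero_iff, Finset.mem_singleton]
          constructor
          · intro h; ext i; exact h i (Finset.mem_univ i)
          · rintro rfl; simp
        rw [this, Finset.card_singleton]
      omega
    · rw [part_sup_lt i1 hF 0 (by omega), i4]

theorem hilbert {s : ℕ} (hg : 1 ≤ g) (fs : List (MvPolynomial (Fin g) k)) (hl : fs.length = g)
    (hh : ∀ f ∈ fs, f.IsHomogeneous (s + 1))
    (hreg : IsWeaklyRegular (MvPolynomial (Fin g) k) fs) :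
    Module.finrank k (part (Ideal.ofList fs) (s + 1)) = g ∧
    Module.finrank k (part (Ideal.ofList fs) (g * s)) + 1 = (Mon g (g * s)).card ∧
    Module.finrank k (part (Ideal.ofList fs) (g * s + 1)) = (Mon g (g * s + 1)).card := by
  obtain ⟨i1, i2, i3, i4⟩ := take_facts fs hh hreg g hl.ge
  rw [List.take_of_length_le hl.le] at *
  refine ⟨i3, ?_⟩
  set Q : Polynomial ℤ := (∑ i ∈ Finset.range (s + 1), Polynomial.X ^ i) with hQ
  have hQm : Q.Monic := Polynomial.monic_geom_sum_X (by omega)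
  have hQd : Q.natDegree = s := by
    apply le_antisymm
    · rw [hQ]
      refine Polynomial.natDegree_sum_le_of_forall_le _ _ fun i hi => ?_
      rw [Polynomial.natDegree_X_pow]
      have := Finset.mem_range.1 hi
      omega
    · apply Polynomial.le_natDegree_of_ne_zero
      rw [hQ, Polynomial.finsetSum_coeff]
      simp [Polynomial.coeff_X_pow]
  have h1 : (1 - PowerSeries.X ^ (s + 1) : PowerSeries ℤ) =
      (1 - PowerSeries.X) * (Q : PowerSeries ℤ) := by
    have h2 : (1 - Polynomial.X ^ (s + 1) : Polynomial ℤ) = (1 - Polynomial.X) * Q := by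
      rw [hQ]; have := mul_geom_sum (Polynomial.X : Polynomial ℤ) (s + 1)
      linear_combination this
    have h3 := congrArg (Polynomial.coeToPowerSeries.ringHom (R := ℤ)) h2
    simpa using h3
  have h2 : PowerSeries.mk (Hf (Ideal.ofList fs)) = ((Q ^ g : Polynomial ℤ) : PowerSeries ℤ) := by
    rw [i2, h1, mul_pow, ← mul_assoc, Hf_bot_series hg, one_mul, Polynomial.coe_pow]
  have hd : (Q ^ g).natDegree = g * s := by rw [hQm.natDegree_pow, hQd]
  constructor
  · have h3 := congrArg (PowerSeries.coeff (g * s)) h2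
    rw [PowerSeries.coeff_mk, Polynomial.coeff_coe, ← hd, (hQm.pow g).coeff_natDegree, hd] at h3
    unfold Hf at h3
    omega
  · have h3 := congrArg (PowerSeries.coeff (g * s + 1)) h2
    rw [PowerSeries.coeff_mk, Polynomial.coeff_coe,
      Polynomial.coeff_eq_zero_of_natDegree_lt (by omega)] at h3
    unfold Hf at h3
    omega

end Hilbert

section Fiber

open MvPolynomial RingTheory.Sequence

variable {R : Type u} [CommRing R] [IsNoetherianRing R] [IsLocalRing R] {g : ℕ}

lemma exists_hom_lift {F : MvPolynomial (Fin g) (ResidueField R)} {d : ℕ}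
    (hF : F.IsHomogeneous d) :
    ∃ P : MvPolynomial (Fin g) R, P.IsHomogeneous d ∧ map (residue R) P = F := by
  obtain ⟨P0, rfl⟩ := map_surjective (σ := Fin g) (residue R) residue_surjective F
  refine ⟨homogeneousComponent d P0, homogeneousComponent_isHomogeneous _ _, ?_⟩
  conv_rhs => rw [← hc_self hF]
  ext b
  rw [coeff_map, coeff_homogeneousComponent, coeff_homogeneousComponent, coeff_map]
  split_ifs
  · rfl
  · exact map_zero _

/-- The forms over the residue field, of degree `d`, which lift to forms whose value at `x`
lies in `J`. -/
noncomputable def W (x : Fin g → R) (J : Ideal R) (d : ℕ) :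
    Submodule (ResidueField R) (MvPolynomial (Fin g) (ResidueField R)) where
  carrier := {F | ∃ P : MvPolynomial (Fin g) R, P.IsHomogeneous d ∧ eval x P ∈ J ∧
    map (residue R) P = F}
  add_mem' := by
    rintro _ _ ⟨P, h1, h2, rfl⟩ ⟨Q, h3, h4, rfl⟩
    exact ⟨P + Q, h1.add h3, by rw [map_add]; exact J.add_mem h2 h4, map_add _ _ _⟩
  zero_mem' := ⟨0, isHomogeneous_zero _ _ _, by rw [map_zero]; exact J.zero_mem, map_zero _⟩
  smul_mem' := by
    rintro c _ ⟨P, h1, h2, rfl⟩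
    obtain ⟨r, rfl⟩ := residue_surjective c
    refine ⟨C r * P, h1.C_mul r, ?_, ?_⟩
    · rw [map_mul]; exact J.mul_mem_left _ h2
    · rw [map_mul, map_C, smul_eq_C_mul]

lemma mem_W {x : Fin g → R} {J : Ideal R} {d : ℕ}
    {F : MvPolynomial (Fin g) (ResidueField R)} : F ∈ W x J d ↔
    ∃ P : MvPolynomial (Fin g) R, P.IsHomogeneous d ∧ eval x P ∈ J ∧ map (residue R) P = F :=
  Iff.rfl

lemma W_le (x : Fin g → R) (J : Ideal R) (d : ℕ) :
    W x J d ≤ homogeneousSubmodule (Fin g) (ResidueField R) d := by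
  rintro _ ⟨P, h1, _, rfl⟩
  exact h1.map _

lemma W_mono (x : Fin g → R) {J J' : Ideal R} (h : J' ≤ J) (d : ℕ) : W x J' d ≤ W x J d := by
  rintro _ ⟨P, h1, h2, rfl⟩
  exact ⟨P, h1, h h2, rfl⟩

instance W_finite (x : Fin g → R) (J : Ideal R) (d : ℕ) :
    FiniteDimensional (ResidueField R) (W x J d) :=
  Submodule.finiteDimensional_of_le (W_le x J d)

lemma hc_mem_W (x : Fin g → R) (J : Ideal R) (j : ℕ)
    {p : MvPolynomial (Fin g) (ResidueField R)} (hp : p ∈ Ideal.span (W x J j : Set _)) (d : ℕ) :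
    homogeneousComponent d p ∈ W x J d := by
  suffices h : ∀ c : MvPolynomial (Fin g) (ResidueField R),
      homogeneousComponent d (c * p) ∈ W x J d by simpa using h 1
  induction hp using Submodule.span_induction with
  | mem F hF =>
    intro c
    obtain ⟨P, h1, h2, rfl⟩ := hF
    rcases Nat.lt_or_ge d j with h | h
    · rw [hc_mul_lt (h1.map _) c d h]; exact Submodule.zero_mem _
    · obtain ⟨e, rfl⟩ := Nat.exists_eq_add_of_le' h
      rw [hc_mul (h1.map _)]
      obtain ⟨Q, hQ, hQc⟩ := exists_hom_lift (homogeneousComponent_isHomogeneous e c)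
      refine ⟨Q * P, hQ.mul h1, ?_, ?_⟩
      · rw [map_mul]; exact J.mul_mem_left _ h2
      · rw [map_mul, hQc]
  | zero => intro c; rw [mul_zero, map_zero]; exact Submodule.zero_mem _
  | add a b _ _ ha hb =>
    intro c
    rw [mul_add, map_add]
    exact Submodule.add_mem _ (ha c) (hb c)
  | smul r a _ ha =>
    intro c
    rw [smul_eq_mul, ← mul_assoc]
    exact ha _

lemma eval_sub_mem (x : Fin g → R) {P : MvPolynomial (Fin g) R} {d : ℕ}
    (hP : P.IsHomogeneous d) {a : Ideal R} (h : ∀ b, P.coeff b ∈ a) :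
    eval x P ∈ a * Ideal.span (Set.range x) ^ d := by
  rw [eval_eq_sum_univ]
  refine Ideal.sum_mem _ fun b hb => ?_
  refine Ideal.mul_mem_mul (h b) ?_
  have h1 := hom_sum hP (mem_support_iff.1 hb)
  rw [← h1, ← Finset.prod_pow_eq_pow_sum]
  exact Ideal.prod_mem_prod fun i _ =>
    Ideal.pow_mem_pow (Ideal.subset_span (Set.mem_range_self i)) _

lemma residue_ker {P Q : MvPolynomial (Fin g) R}
    (h : map (residue R) P = map (residue R) Q) (b : Fin g →₀ ℕ) :
    (P - Q).coeff b ∈ maximalIdeal R := by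
  rw [← residue_eq_zero_iff, coeff_sub, map_sub, ← coeff_map, ← coeff_map, h, sub_self]

lemma eval_of_mem_W (x : Fin g → R) (J : Ideal R) {d : ℕ} {Q : MvPolynomial (Fin g) R}
    (hQ : Q.IsHomogeneous d) (h : map (residue R) Q ∈ W x J d) :
    eval x Q ∈ J ⊔ maximalIdeal R • Ideal.span (Set.range x) ^ d := by
  obtain ⟨P, h1, h2, h3⟩ := h
  have h4 := eval_sub_mem x (hQ.sub h1) (residue_ker h3.symm)
  rw [map_sub] at h4
  have := Submodule.add_mem_sup h2 h4
  rwa [add_sub_cancel] at this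

lemma nak {N N' : Ideal R} (h : N' ≤ N ⊔ maximalIdeal R • N') : N' ≤ N :=
  Submodule.le_of_le_smul_of_le_jacobson_bot (IsNoetherian.noetherian N')
    (IsLocalRing.maximalIdeal_le_jacobson _) h

lemma exists_form_of_mem_mul (x : Fin g → R) {J : Ideal R} {j e : ℕ}
    (hJ : J ≤ Ideal.span (Set.range x) ^ j) {y : R}
    (hy : y ∈ J * Ideal.span (Set.range x) ^ e) :
    ∃ P : MvPolynomial (Fin g) R, P.IsHomogeneous (j + e) ∧ eval x P = y ∧
      map (residue R) P ∈ Ideal.span (W x J j : Set (MvPolynomial (Fin g) (ResidueField R))) := by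
  induction hy using Submodule.mul_induction_on' with
  | mem_mul_mem a ha b hb =>
    obtain ⟨P, hP, rfl⟩ := (Ideal.mem_span_pow_iff_exists_isHomogeneous _ _).1 (hJ ha)
    obtain ⟨Q, hQ, rfl⟩ := (Ideal.mem_span_pow_iff_exists_isHomogeneous _ _).1 hb
    refine ⟨P * Q, hP.mul hQ, map_mul _ _ _, ?_⟩
    rw [map_mul]
    exact Ideal.mul_mem_right _ _ (Ideal.subset_span ⟨P, hP, ha, rfl⟩)
  | add a _ b _ ha hb =>
    obtain ⟨P, h1, h2, h3⟩ := ha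
    obtain ⟨Q, h4, h5, h6⟩ := hb
    exact ⟨P + Q, h1.add h4, by rw [map_add, h2, h5], by rw [map_add]; exact Ideal.add_mem _ h3 h6⟩

lemma pow_le_span_W {x : Fin g → R} (hx : ∀ i, x i ∈ maximalIdeal R) (h : Reg x)
    {J : Ideal R} {j : ℕ} (hJ : IsReduction J (Ideal.span (Set.range x) ^ j)) :
    ∃ D, (Ideal.span (Set.range (X : Fin g → MvPolynomial (Fin g) (ResidueField R)))) ^ D ≤
      Ideal.span (W x J j : Set (MvPolynomial (Fin g) (ResidueField R))) := by
  obtain ⟨hJ1, r, hr⟩ := hJ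
  have hIm : Ideal.span (Set.range x) ≤ maximalIdeal R := by
    rw [Ideal.span_le]; rintro _ ⟨i, rfl⟩; exact hx i
  refine ⟨j + j * r, ?_⟩
  rw [← pow_mul, ← pow_mul, mul_add, mul_one, add_comm] at hr
  have key : ∀ b : Fin g →₀ ℕ, ∑ i, b i = j + j * r →
      (monomial b 1 : MvPolynomial (Fin g) (ResidueField R)) ∈
      Ideal.span (W x J j : Set (MvPolynomial (Fin g) (ResidueField R))) := by
    intro b hb
    have hM : (monomial b (1 : R)).IsHomogeneous (j + j * r) :=
      isHomogeneous_monomial _ (by rw [Finsupp.degree_eq_sum]; exact hb)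
    have h1 : eval x (monomial b (1 : R)) ∈ J * Ideal.span (Set.range x) ^ (j * r) := by
      rw [← hr, Ideal.mem_span_pow_iff_exists_isHomogeneous]
      exact ⟨_, hM, rfl⟩
    obtain ⟨P, h2, h3, h4⟩ := exists_form_of_mem_mul x hJ1 h1
    have h5 := qr hx h (hM.sub h2) (by rw [map_sub, h3, sub_self]; exact Ideal.zero_mem _)
    have h6 : map (residue R) (monomial b (1 : R)) = map (residue R) P := by
      rw [← sub_eq_zero, ← map_sub]
      ext c
      rw [coeff_map, coeff_zero, residue_eq_zero_iff]
      exact hIm (h5 c)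
    rw [map_monomial, map_one] at h6
    rw [h6]; exact h4
  intro y hy
  obtain ⟨P, hP, rfl⟩ := (Ideal.mem_span_pow_iff_exists_isHomogeneous _ _).1 hy
  rw [eval_eq']
  refine Ideal.sum_mem _ fun b hb => Ideal.mul_mem_left _ _ ?_
  have := key b (hom_sum hP (mem_support_iff.1 hb))
  rw [monomial_eq, Finsupp.prod_fintype _ _ (fun i => pow_zero _)] at this
  simpa using this

theorem reduction_facts {x : Fin g → R} (hg : 1 ≤ g) [Infinite (ResidueField R)]
    (hx : ∀ i, x i ∈ maximalIdeal R) (h : Reg x)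
    {J : Ideal R} {s : ℕ} (hJ : IsReduction J (Ideal.span (Set.range x) ^ (s + 1))) :
    g ≤ Module.finrank (ResidueField R) (W x J (s + 1)) ∧
    Ideal.span (Set.range x) ^ (g * s + 1) ≤ J ∧
    ∃ δ ∈ Ideal.span (Set.range x) ^ (g * s),
      Ideal.span (Set.range x) ^ (g * s) ≤ J ⊔ Ideal.span {δ} := by
  obtain ⟨D, hD⟩ := pow_le_span_W hx h hJ
  obtain ⟨fs, hl, hfs, hreg⟩ := exists_regular_poly _ D hD
  obtain ⟨H1, H2, H3⟩ := hilbert hg fs hl (fun f hf => W_le _ _ _ (hfs f hf)) hreg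
  have hle : ∀ d, part (Ideal.ofList fs) d ≤ W x J d := by
    rintro d p ⟨hp, hh⟩
    rw [← hc_self hh]
    refine hc_mem_W x J (s + 1) ?_ d
    have : Ideal.ofList fs ≤ Ideal.span
        (W x J (s + 1) : Set (MvPolynomial (Fin g) (ResidueField R))) := by
      unfold Ideal.ofList
      exact Ideal.span_mono fun f hf => hfs f hf
    exact this hp
  refine ⟨?_, ?_, ?_⟩
  · exact H1.ge.trans (Submodule.finrank_mono (hle _))
  · apply nak
    intro y hy
    obtain ⟨Q, hQ, rfl⟩ := (Ideal.mem_span_pow_iff_exists_isHomogeneous _ _).1 hy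
    refine eval_of_mem_W x J hQ (hle _ ?_)
    rw [Submodule.eq_of_le_of_finrank_eq (S₁ := part (Ideal.ofList fs) (g * s + 1))
      (S₂ := homogeneousSubmodule (Fin g) (ResidueField R) (g * s + 1)) inf_le_right
      (by rw [H3, finrank_homSub])]
    exact hQ.map _
  · obtain ⟨F, hF, hF2⟩ : ∃ F ∈ homogeneousSubmodule (Fin g) (ResidueField R) (g * s),
        F ∉ part (Ideal.ofList fs) (g * s) := by
      by_contra hcon
      push Not at hcon
      have h1 := Submodule.finrank_mono (R := ResidueField R)
        (s := homogeneousSubmodule (Fin g) (ResidueField R) (g * s)) hcon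
      rw [finrank_homSub] at h1
      omega
    have hlt : part (Ideal.ofList fs) (g * s) <
        part (Ideal.ofList fs) (g * s) ⊔ Submodule.span (ResidueField R) {F} :=
      lt_of_le_of_ne le_sup_left fun he => hF2 (he ▸ Submodule.mem_sup_right
        (Submodule.mem_span_singleton_self F))
    have h1 := Submodule.finrank_lt_finrank_of_lt hlt
    have h2 : part (Ideal.ofList fs) (g * s) ⊔ Submodule.span (ResidueField R) {F} =
        homogeneousSubmodule (Fin g) (ResidueField R) (g * s) := by
      have hle2 : part (Ideal.ofList fs) (g * s) ⊔ Submodule.span (ResidueField R) {F} ≤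
          homogeneousSubmodule (Fin g) (ResidueField R) (g * s) :=
        sup_le inf_le_right ((Submodule.span_singleton_le_iff_mem _ _).2 hF)
      refine Submodule.eq_of_le_of_finrank_le hle2 ?_
      rw [finrank_homSub]
      omega
    obtain ⟨Q0, hQ0, hQF⟩ := exists_hom_lift hF
    refine ⟨eval x Q0, (Ideal.mem_span_pow_iff_exists_isHomogeneous _ _).2 ⟨Q0, hQ0, rfl⟩, ?_⟩
    apply nak
    intro y hy
    obtain ⟨Q, hQ, rfl⟩ := (Ideal.mem_span_pow_iff_exists_isHomogeneous _ _).1 hy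
    have h3 : map (residue R) Q ∈ part (Ideal.ofList fs) (g * s) ⊔
        Submodule.span (ResidueField R) {F} := by
      rw [h2]; exact hQ.map _
    obtain ⟨p, hp, z, hz, hpz⟩ := Submodule.mem_sup.1 h3
    obtain ⟨c, rfl⟩ := Submodule.mem_span_singleton.1 hz
    obtain ⟨r, rfl⟩ := residue_surjective c
    have h4 := eval_of_mem_W x J (Q := Q - C r * Q0) (hQ.sub (hQ0.C_mul r)) (by
      rw [map_sub, map_mul, map_C, hQF, ← hpz, smul_eq_C_mul, add_sub_cancel_right]
      exact hle _ hp)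
    rw [map_sub, map_mul, eval_C] at h4
    have h5 : r * eval x Q0 ∈ Ideal.span {eval x Q0} :=
      Ideal.mul_mem_left _ _ (Ideal.subset_span rfl)
    have h6 := Submodule.add_mem_sup h4 h5
    rw [sub_add_cancel] at h6
    rwa [sup_right_comm] at h6

end Fiber

section Minimal

open MvPolynomial RingTheory.Sequence

variable {R : Type u} [CommRing R] [IsNoetherianRing R] [IsLocalRing R] {g : ℕ}

theorem isMinimal_of_gens {x : Fin g → R} (hg : 1 ≤ g) [Infinite (ResidueField R)]
    (hx : ∀ i, x i ∈ maximalIdeal R) (h : Reg x) {s : ℕ} (f : Fin g → R)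
    (hJ : IsReduction (Ideal.span (Set.range f)) (Ideal.span (Set.range x) ^ (s + 1))) :
    IsMinimalReduction (Ideal.span (Set.range f)) (Ideal.span (Set.range x) ^ (s + 1)) := by
  refine ⟨hJ, fun J' hJ' hle => le_antisymm hle ?_⟩
  have hIm : Ideal.span (Set.range x) ≤ maximalIdeal R := by
    rw [Ideal.span_le]; rintro _ ⟨i, rfl⟩; exact hx i
  have hf : ∀ i, ∃ P : MvPolynomial (Fin g) R, P.IsHomogeneous (s + 1) ∧ eval x P = f i :=
    fun i => (Ideal.mem_span_pow_iff_exists_isHomogeneous _ _).1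
      (hJ.1 (Ideal.subset_span (Set.mem_range_self i)))
  choose fh hfh hfe using hf
  have hex : ∀ y ∈ Ideal.span (Set.range f), ∃ a : Fin g → R, ∑ i, a i * f i = y := by
    intro y hy
    obtain ⟨a, ha⟩ := (Submodule.mem_span_range_iff_exists_fun R).1 hy
    exact ⟨a, ha⟩
  have hP : ∀ P : MvPolynomial (Fin g) R, P.IsHomogeneous (s + 1) → ∀ a : Fin g → R,
      ∑ i, a i * f i = eval x P →
      map (residue R) P = ∑ i, residue R (a i) • map (residue R) (fh i) := by
    intro P hP a ha
    have h1 : (∑ i, C (a i) * fh i).IsHomogeneous (s + 1) :=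
      IsHomogeneous.sum _ _ _ fun i _ => (hfh i).C_mul _
    have h2 := qr hx h (hP.sub h1) (by
      rw [map_sub, map_sum, ← ha]
      simp only [map_mul, eval_C, hfe, sub_self]
      exact Ideal.zero_mem _)
    have h3 : map (residue R) (P - ∑ i, C (a i) * fh i) = 0 := by
      ext b
      rw [coeff_map, coeff_zero, residue_eq_zero_iff]
      exact hIm (h2 b)
    rw [map_sub, sub_eq_zero] at h3
    rw [h3, map_sum]
    refine Finset.sum_congr rfl fun i _ => ?_
    rw [map_mul, map_C, smul_eq_C_mul]
  have hWle : W x (Ideal.span (Set.range f)) (s + 1) ≤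
      Submodule.span (ResidueField R) (Set.range fun i => map (residue R) (fh i)) := by
    rintro _ ⟨P, h1, h2, rfl⟩
    obtain ⟨a, ha⟩ := hex _ h2
    rw [hP P h1 a ha]
    exact Submodule.sum_mem _ fun i _ =>
      Submodule.smul_mem _ _ (Submodule.subset_span (Set.mem_range_self i))
  have hW' := (W_mono x hle (s + 1)).trans hWle
  have hd := (reduction_facts hg hx h hJ').1
  have hc := finrank_range_le_card (R := ResidueField R) (fun i => map (residue R) (fh i))
  rw [Fintype.card_fin] at hc
  haveI : FiniteDimensional (ResidueField R)
      (Submodule.span (ResidueField R) (Set.range fun i => map (residue R) (fh i))) :=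
    FiniteDimensional.span_of_finite _ (Set.finite_range _)
  have hm := Submodule.finrank_mono hW'
  have hcc : Module.finrank (ResidueField R)
      (Submodule.span (ResidueField R) (Set.range fun i => map (residue R) (fh i))) ≤ g := hc
  have heq := Submodule.eq_of_le_of_finrank_le hW' (hcc.trans hd)
  have hli : LinearIndependent (ResidueField R) fun i => map (residue R) (fh i) := by
    rw [linearIndependent_iff_card_eq_finrank_span, Fintype.card_fin]
    exact le_antisymm (hd.trans hm) hcc
  apply nak
  rw [Ideal.span_le]
  rintro _ ⟨i, rfl⟩
  have h1 : map (residue R) (fh i) ∈ W x J' (s + 1) := by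
    rw [heq]; exact Submodule.subset_span (Set.mem_range_self i)
  obtain ⟨P, h2, h3, h4⟩ := h1
  obtain ⟨a, ha⟩ := hex (f i - eval x P)
    (Ideal.sub_mem _ (Ideal.subset_span (Set.mem_range_self i)) (hle h3))
  have h5 := hP (fh i - P) ((hfh i).sub h2) a (by rw [ha, map_sub, hfe])
  rw [map_sub, h4, sub_self] at h5
  have h6 := Fintype.linearIndependent_iff.1 hli _ h5.symm
  have h7 : f i - eval x P ∈ maximalIdeal R • Ideal.span (Set.range f) := by
    rw [← ha]
    refine Ideal.sum_mem _ fun l _ => Ideal.mul_mem_mul ?_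
      (Ideal.subset_span (Set.mem_range_self l))
    exact (residue_eq_zero_iff _).1 (h6 l)
  have := Submodule.add_mem_sup h3 h7
  rwa [add_sub_cancel] at this

lemma span_comp_perm (x : Fin g → R) (σ : Equiv.Perm (Fin g)) :
    Ideal.span (Set.range (x ∘ σ)) = Ideal.span (Set.range x) := by
  rw [σ.surjective.range_comp]

theorem SJ_minimal {x : Fin g → R} (hg : 1 ≤ g) [Infinite (ResidueField R)]
    (hx : ∀ i, x i ∈ maximalIdeal R) (h : Reg x) (s : ℕ) (σ : Equiv.Perm (Fin g)) (c : ℕ → R) :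
    IsMinimalReduction (SJ (x ∘ σ) c s) (Ideal.span (Set.range x) ^ (s + 1)) := by
  rw [← span_comp_perm x σ]
  have h1 := SJ_isReduction (x ∘ σ) c s
  rw [SJ_eq] at h1 ⊢
  exact isMinimal_of_gens hg (fun i => hx _) (h.perm hx σ) _ h1

theorem core_eq {x : Fin g → R} (hg : 1 ≤ g) [Infinite (ResidueField R)]
    (hx : ∀ i, x i ∈ maximalIdeal R) (h : Reg x) (s : ℕ) :
    core (Ideal.span (Set.range x) ^ (s + 1)) = Ideal.span (Set.range x) ^ (g * s + 1) := by
  apply le_antisymm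
  · obtain ⟨q, hq⟩ := exists_special hg h hx s
    refine le_trans (le_iInf fun i => ?_) hq
    exact sInf_le (SJ_minimal hg hx h s _ _)
  · exact le_sInf fun J hJ => (reduction_facts hg hx h hJ.1).2.1

theorem gamma_le {x : Fin g → R} (hg : 1 ≤ g) [Infinite (ResidueField R)]
    (hx : ∀ i, x i ∈ maximalIdeal R) (h : Reg x) (s : ℕ) :
    gamma (Ideal.span (Set.range x) ^ (s + 1)) ≤ ((Mon g (g * s)).card : ℕ∞) := by
  obtain ⟨q, hq⟩ := exists_special hg h hx s
  let e := (Mon g (g * s)).equivFin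
  refine sInf_le ⟨_, rfl, fun i => SJ (x ∘ (q (e.symm i)).1) (q (e.symm i)).2 s,
    fun i => SJ_minimal hg hx h s _ _, ?_⟩
  rw [e.symm.iInf_comp (g := fun i => SJ (x ∘ (q i).1) (q i).2 s)]
  apply le_antisymm
  · exact le_iInf fun i => sInf_le (SJ_minimal hg hx h s _ _)
  · rw [core_eq hg hx h]; exact hq

theorem le_gamma {x : Fin g → R} (hg : 1 ≤ g) [Infinite (ResidueField R)]
    (hx : ∀ i, x i ∈ maximalIdeal R) (h : Reg x) (s : ℕ) :
    ((Mon g (g * s)).card : ℕ∞) ≤ gamma (Ideal.span (Set.range x) ^ (s + 1)) := by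
  refine le_sInf ?_
  rintro _ ⟨t, rfl, Js, hJs, hcore⟩
  rw [core_eq hg hx h] at hcore
  by_contra hlt
  rw [not_le, Nat.cast_lt] at hlt
  set I := Ideal.span (Set.range x) with hI
  have hIm : I ≤ maximalIdeal R := by
    rw [hI, Ideal.span_le]; rintro _ ⟨i, rfl⟩; exact hx i
  haveI : Nontrivial (R ⧸ I) := Ideal.Quotient.nontrivial_iff.2 fun htop =>
    (maximalIdeal.isMaximal R).ne_top (top_le_iff.1 (htop ▸ hIm))
  choose δ hδ hδJ using fun i => (reduction_facts hg hx h (hJs i).1).2.2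
  have hm : ∀ b : Mon g (g * s), ∏ i, x i ^ b.1 i ∈ I ^ (g * s) := by
    intro b
    have h1 := mem_Mon.1 b.2
    have h2 : ∏ i, x i ^ b.1 i ∈ ∏ i, I ^ b.1 i := Ideal.prod_mem_prod fun i _ =>
      Ideal.pow_mem_pow (Ideal.subset_span (Set.mem_range_self i)) _
    rwa [Finset.prod_pow_eq_pow_sum, h1] at h2
  have hα : ∀ i, ∀ b : Mon g (g * s), ∃ α : R, (∏ l, x l ^ b.1 l) - α * δ i ∈ Js i := by
    intro i b
    obtain ⟨y, hy, z, hz, hyz⟩ := Submodule.mem_sup.1 (hδJ i (hm b))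
    obtain ⟨α, rfl⟩ := Ideal.mem_span_singleton'.1 hz
    exact ⟨α, by rw [← hyz, add_sub_cancel_right]; exact hy⟩
  choose α hα using hα
  let A : Matrix (Fin t) (Mon g (g * s)) (R ⧸ I) :=
    Matrix.of fun i b => Ideal.Quotient.mk I (α i b)
  obtain ⟨v, hv0, hv⟩ : ∃ v : Mon g (g * s) → R ⧸ I, v ≠ 0 ∧ A.mulVec v = 0 := by
    by_contra hcon
    push Not at hcon
    have hinj : Function.Injective (Matrix.mulVecLin A) := by
      rw [← LinearMap.ker_eq_bot, LinearMap.ker_eq_bot']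
      intro v hv
      by_contra hv0
      exact hcon v hv0 hv
    have h2 := LinearMap.finrank_le_finrank_of_injective hinj
    simp at h2
    omega
  choose p hp using fun b => Ideal.Quotient.mk_surjective (v b)
  have hker : ∀ i, ∑ b, α i b * p b ∈ I := by
    intro i
    have := congrFun hv i
    rw [← Ideal.Quotient.eq_zero_iff_mem, map_sum]
    simpa [Matrix.mulVec, dotProduct, A, hp] using this
  have hmem : ∑ b, p b * ∏ l, x l ^ b.1 l ∈ I ^ (g * s + 1) := by
    rw [hcore, Ideal.mem_iInf]
    intro i
    have h1 : ∑ b, p b * ((∏ l, x l ^ b.1 l) - α i b * δ i) ∈ Js i :=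
      Ideal.sum_mem _ fun b _ => Ideal.mul_mem_left _ _ (hα i b)
    have h2 : (∑ b, α i b * p b) * δ i ∈ Js i := by
      refine (reduction_facts hg hx h (hJs i).1).2.1 ?_
      rw [pow_succ']
      exact Ideal.mul_mem_mul (hker i) (hδ i)
    have := Ideal.add_mem _ h1 h2
    rw [Finset.sum_mul, ← Finset.sum_add_distrib] at this
    convert this using 2 with b
    ring
  let P : MvPolynomial (Fin g) R := ∑ b : Mon g (g * s), monomial b.1 (p b)
  have hPh : P.IsHomogeneous (g * s) := IsHomogeneous.sum _ _ _ fun b _ =>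
    isHomogeneous_monomial _ (by rw [Finsupp.degree_eq_sum]; exact mem_Mon.1 b.2)
  have hPe : eval x P = ∑ b, p b * ∏ l, x l ^ b.1 l := by
    rw [map_sum]
    refine Finset.sum_congr rfl fun b _ => ?_
    rw [eval_monomial, Finsupp.prod_fintype _ _ (fun i => pow_zero _)]
  have hq := qr hx h hPh (by rw [hPe]; exact hmem)
  apply hv0
  ext b
  have h1 : P.coeff b.1 = p b := by
    classical
    rw [coeff_sum, Finset.sum_eq_single b]
    · rw [coeff_monomial, if_pos rfl]
    · intro c _ hc
      rw [coeff_monomial, if_neg fun e => hc (Subtype.ext e)]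
    · intro hb; exact absurd (Finset.mem_univ b) hb
  have h2 := hq b.1
  rw [h1] at h2
  rw [← hp b]
  exact Ideal.Quotient.eq_zero_iff_mem.2 h2

end Minimal

section Length

open RingTheory.Sequence

variable {R : Type u} [CommRing R] [IsNoetherianRing R] [IsLocalRing R]

lemma ofList_le_max {rs : List R} (h : IsRegular R rs) : Ideal.ofList rs ≤ maximalIdeal R := by
  apply IsLocalRing.le_maximalIdeal
  intro htop
  apply h.top_ne_smul
  rw [htop]
  simp

lemma ht_eq_length {rs : List R} (h : IsRegular R rs) :
    ht (Ideal.ofList rs) = (rs.length : WithBot ℕ∞) := by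
  apply le_antisymm
  · obtain ⟨p, hp, hpm⟩ := Ideal.exists_minimalPrimes_le (ofList_le_max h)
    have : p.IsPrime := hp.1.1
    refine (iInf₂_le (⟨p, hp.1.1⟩ : PrimeSpectrum R) hp.1.2).trans ?_
    unfold rDim
    rw [IsLocalization.AtPrime.ringKrullDim_eq_height p]
    have hs : (Set.Finite {r | r ∈ rs}) := List.finite_toSet rs
    have h1 := Ideal.height_le_card_of_mem_minimalPrimes_span hs hp
    have h2 : ({r | r ∈ rs} : Set R).ncard ≤ rs.length := by
      classical
      have : ({r | r ∈ rs} : Set R) = (rs.toFinset : Set R) := by ext; simp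
      rw [this, Set.ncard_coe_finset]
      exact List.toFinset_card_le rs
    exact_mod_cast h1.trans (by exact_mod_cast h2)
  · refine le_iInf₂ fun p hp => ?_
    unfold rDim
    have h1 := h.toIsWeaklyRegular.isRegular_of_isLocalization_of_mem
      (Localization.AtPrime p.asIdeal) p.asIdeal (fun r hr => hp (Ideal.subset_span hr))
    have : IsNoetherianRing (Localization.AtPrime p.asIdeal) :=
      IsLocalization.isNoetherianRing p.asIdeal.primeCompl _ inferInstance
    have h2 := ringKrullDim_add_length_eq_ringKrullDim_of_isRegular _ h1
    rw [List.length_map] at h2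
    rw [← h2]
    have : Nontrivial (Localization.AtPrime p.asIdeal ⧸
        Ideal.ofList (rs.map (algebraMap R (Localization.AtPrime p.asIdeal)))) :=
      Ideal.Quotient.nontrivial_iff.2 fun htop =>
        (maximalIdeal.isMaximal _).ne_top (top_le_iff.1 (htop ▸ ofList_le_max h1))
    exact le_add_of_nonneg_left ringKrullDim_nonneg_of_nontrivial

end Length

/-- Proposition 4.2: for an ideal of height `g ≥ 1` generated by a regular sequence
in a Noetherian local ring with infinite residue field, `core(I^j) = I^{gj-g+1}`,
and if `R` is Gorenstein then `γ(I^j) = C(gj-1, g-1)`. -/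
theorem statement17 {R : Type u} [CommRing R] [IsNoetherianRing R] [IsLocalRing R]
    (hres : Infinite (ResidueField R))
    (I : Ideal R) (g : ℕ) (hg1 : 1 ≤ g) (hht : ht I = (g : WithBot ℕ∞))
    (hreg : ∃ rs : List R, RingTheory.Sequence.IsRegular R rs ∧ Ideal.ofList rs = I)
    (j : ℕ) (hj : 1 ≤ j) :
    core (I ^ j) = I ^ (g * j - g + 1) ∧
    (IsGorensteinLocalRing R →
      gamma (I ^ j) = ((Nat.choose (g * j - 1) (g - 1) : ℕ) : ℕ∞)) := by
  obtain ⟨rs, hrs, rfl⟩ := hreg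
  rw [ht_eq_length hrs] at hht
  have hlen : rs.length = g := by exact_mod_cast hht
  subst hlen
  obtain ⟨s, rfl⟩ := Nat.exists_eq_add_of_le' hj
  have hx : ∀ i, rs.get i ∈ maximalIdeal R := fun i =>
    ofList_le_max hrs (Ideal.subset_span (List.get_mem rs i))
  have hr : Reg rs.get := by
    unfold Reg
    rw [List.ofFn_get]
    exact hrs.toIsWeaklyRegular
  have hI : Ideal.ofList rs = Ideal.span (Set.range rs.get) := by
    unfold Ideal.ofList
    rw [Set.range_list_get]
  rw [hI]
  have e1 : rs.length * (s + 1) - rs.length + 1 = rs.length * s + 1 := by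
    rw [mul_add, mul_one, Nat.add_sub_cancel]
  have e2 : rs.length * (s + 1) - 1 = rs.length - 1 + rs.length * s := by
    rw [mul_add, mul_one]; omega
  rw [e1, e2]
  refine ⟨core_eq hg1 hx hr s, fun _ => ?_⟩
  rw [← card_Mon hg1]
  exact le_antisymm (gamma_le hg1 hx hr s) (le_gamma hg1 hx hr s)

end CPU
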